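/- arXiv:2603.15014 — 2 statements merged into one kernel-verified Lean document; each statement's English description precedes it below -/
import Mathlib

section
/- Let f(x) = F₁(x') + ωF₂(x') be generalized partial-slice regular on Ω_D (f ∈ GSR(Ω_D)). Then F₁ and F₂ are real analytic on D, f is real analytic on Ω_D, and Δ_{x'}F₁ = 0 and Δ_{x'}F₂ = 0 on D, where Δ_{x'} = Δ_{x_p} + ∂_r² is the Laplacian on ℝ^{p+2}. -/
open scoped BigOperators
open Filter Topology

namespace GPSM

variable (A : Type*) [NormedAddCommGroup A] [NormedSpace ℝ A] [Mul A] [One A]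

/-- `A` is a real alternative algebra with unit `1`, of finite dimension `d > 1`,
equipped with an anti-involution `conj` (a real-linear map with `(a^c)^c = a`,
`(ab)^c = b^c a^c`, fixing the reals).  The associator is alternating (left/right
alternative laws). -/
structure IsAltStarAlg (conj : A → A) : Prop where
  finDim : FiniteDimensional ℝ A
  one_lt_finrank : 1 < Module.finrank ℝ A
  mul_add' : ∀ a b c : A, a * (b + c) = a * b + a * c
  add_mul' : ∀ a b c : A, (a + b) * c = a * c + b * c
  smul_mul' : ∀ (r : ℝ) (a b : A), (r • a) * b = r • (a * b)
  mul_smul' : ∀ (r : ℝ) (a b : A), a * (r • b) = r • (a * b)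
  one_mul' : ∀ a : A, 1 * a = a
  mul_one' : ∀ a : A, a * 1 = a
  alt_left : ∀ a b : A, a * (a * b) = a * a * b
  alt_right : ∀ a b : A, a * b * b = a * (b * b)
  conj_add : ∀ a b : A, conj (a + b) = conj a + conj b
  conj_smul : ∀ (r : ℝ) (a : A), conj (r • a) = r • conj a
  conj_conj : ∀ a : A, conj (conj a) = a
  conj_mul : ∀ a b : A, conj (a * b) = conj b * conj a
  conj_one : conj 1 = 1

/-- `v 0, v 1, …, v m` is a hypercomplex basis of the hypercomplex subspace
`M = span(v 0, …, v m)` of `A`: `v 0 = 1`, `t(v s) = 0`, `n(v s) = 1`, the `v s`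
anticommute for distinct `s, t ∈ {1,…,m}`, they are linearly independent, and
`M` is contained in the quadratic cone `Q_A`. -/
structure IsHypBasis (conj : A → A) (v : ℕ → A) (m : ℕ) : Prop where
  v_zero : v 0 = 1
  trace_zero : ∀ s, 1 ≤ s → s ≤ m → v s + conj (v s) = 0
  norm_one : ∀ s, 1 ≤ s → s ≤ m → v s * conj (v s) = 1
  anticomm : ∀ s t, 1 ≤ s → s ≤ m → 1 ≤ t → t ≤ m → s ≠ t → v s * v t = -(v t * v s)
  indep : LinearIndependent ℝ (fun i : Fin (m + 1) => v i)
  mem_cone : ∀ x ∈ Submodule.span ℝ (Set.range fun i : Fin (m + 1) => v (i : ℕ)),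
      ∃ tr nr : ℝ, x + conj x = tr • (1 : A) ∧ x * conj x = nr • (1 : A) ∧
        ((∃ r : ℝ, x = r • (1 : A)) ∨ tr ^ 2 < 4 * nr)

variable {A}

/-- Identification of `ℝ^{m+1}` with the hypercomplex subspace `M`:
`(x_0,…,x_m) ↦ Σ x_s • v s`. -/
def emb (v : ℕ → A) (m : ℕ) (x : Fin (m + 1) → ℝ) : A :=
  ∑ s : Fin (m + 1), x s • v (s : ℕ)

/-- First `p+1` coordinates of a point of `M ≅ ℝ^{m+1}`, i.e. the `x_p`-part. -/
def projP (m p : ℕ) (x : Fin (m + 1) → ℝ) : Fin (p + 1) → ℝ := fun s =>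
  if h : (s : ℕ) < m + 1 then x ⟨(s : ℕ), h⟩ else 0

/-- Inclusion `ℝ^{p+1} ⊆ ℝ^{m+1}` (remaining coordinates `0`). -/
def injP (m p : ℕ) (y : Fin (p + 1) → ℝ) : Fin (m + 1) → ℝ := fun s =>
  if h : (s : ℕ) < p + 1 then y ⟨(s : ℕ), h⟩ else 0

/-- The coordinates of `x_q` (last `q = m - p` coordinates of `x`). -/
def xqpart (m p : ℕ) (x : Fin (m + 1) → ℝ) : Fin (m + 1) → ℝ := fun s =>
  if (s : ℕ) ≤ p then 0 else x s

/-- The coordinates of `x_p` inside `ℝ^{m+1}`. -/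
def xppart (m p : ℕ) (x : Fin (m + 1) → ℝ) : Fin (m + 1) → ℝ := fun s =>
  if (s : ℕ) ≤ p then x s else 0

/-- `r = |x_q|`. -/
noncomputable def rad (m p : ℕ) (x : Fin (m + 1) → ℝ) : ℝ :=
  Real.sqrt (∑ s : Fin (m + 1), (xqpart m p x s) ^ 2)

/-- `ω = x_q / |x_q|` (coordinates), `0` when `x_q = 0`. -/
noncomputable def normq (m p : ℕ) (x : Fin (m + 1) → ℝ) : Fin (m + 1) → ℝ :=
  (rad m p x)⁻¹ • xqpart m p x

/-- The reflection `x = x_p + x_q ↦ x_⋄ = x_p - x_q`. -/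
def reflP (m p : ℕ) (x : Fin (m + 1) → ℝ) : Fin (m + 1) → ℝ := fun s =>
  if (s : ℕ) ≤ p then x s else -x s

/-- The sphere `𝕊 = {x_q ∈ span(v_{p+1},…,v_m) : x_q² = -1}`, in coordinates. -/
def Sph (v : ℕ → A) (m p : ℕ) : Set (Fin (m + 1) → ℝ) :=
  {w | (∀ s : Fin (m + 1), (s : ℕ) ≤ p → w s = 0) ∧ emb v m w * emb v m w = -1}

/-- The point `x_p + r ω` of `M ≅ ℝ^{m+1}`. -/
def pt (m p : ℕ) (w : Fin (m + 1) → ℝ) (y : Fin (p + 1) → ℝ) (r : ℝ) :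
    Fin (m + 1) → ℝ :=
  injP m p y + r • w

/-- The slice `Ω_ω ⊆ ℝ^{p+2}` of `Ω` at `ω`. -/
def sliceSet (m p : ℕ) (Ω : Set (Fin (m + 1) → ℝ)) (w : Fin (m + 1) → ℝ) :
    Set ((Fin (p + 1) → ℝ) × ℝ) := {z | pt m p w z.1 z.2 ∈ Ω}

/-- The restriction `f_ω` of `f` to the slice at `ω`, as a function on `ℝ^{p+2}`. -/
def sliceFun (m p : ℕ) (f : (Fin (m + 1) → ℝ) → A) (w : Fin (m + 1) → ℝ) :
    (Fin (p + 1) → ℝ) × ℝ → A := fun z => f (pt m p w z.1 z.2)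

/-- Partial derivative `∂_{x_s}` of a function on `ℝ^{m+1}`. -/
noncomputable def pdF (m : ℕ) (s : Fin (m + 1)) (f : (Fin (m + 1) → ℝ) → A)
    (x : Fin (m + 1) → ℝ) : A := fderiv ℝ f x (Pi.single s 1)

/-- Partial derivative `∂_{x_s}` of a function on `ℝ^{p+1}`. -/
noncomputable def pdP (p : ℕ) (s : Fin (p + 1)) (g : (Fin (p + 1) → ℝ) → A)
    (y : Fin (p + 1) → ℝ) : A := fderiv ℝ g y (Pi.single s 1)

/-- Partial derivative `∂_{x_s}` of a function on `ℝ^{p+2} = ℝ^{p+1} × ℝ`. -/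
noncomputable def pdSx (p : ℕ) (s : Fin (p + 1)) (G : (Fin (p + 1) → ℝ) × ℝ → A)
    (z : (Fin (p + 1) → ℝ) × ℝ) : A := fderiv ℝ G z (Pi.single s 1, 0)

/-- Partial derivative `∂_r` of a function on `ℝ^{p+2} = ℝ^{p+1} × ℝ`. -/
noncomputable def pdSr (p : ℕ) (G : (Fin (p + 1) → ℝ) × ℝ → A)
    (z : (Fin (p + 1) → ℝ) × ℝ) : A := fderiv ℝ G z (0, 1)

/-- Second partial derivative `∂_r²`. -/
noncomputable def pdSr2 (p : ℕ) (G : (Fin (p + 1) → ℝ) × ℝ → A)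
    (z : (Fin (p + 1) → ℝ) × ℝ) : A := pdSr p (pdSr p G) z

/-- The operator `Σ_{lo ≤ s ≤ hi} v_s ∂_{x_s}` on functions on `ℝ^{m+1}`.
`Dop v m 0 p` is `D_{x_p}`, `Dop v m (p+1) m` is `D_{x_q}`, `Dop v m 0 m` is `D_x`. -/
noncomputable def Dop (v : ℕ → A) (m lo hi : ℕ) (f : (Fin (m + 1) → ℝ) → A)
    (x : Fin (m + 1) → ℝ) : A :=
  ∑ s : Fin (m + 1), if lo ≤ (s : ℕ) ∧ (s : ℕ) ≤ hi then v (s : ℕ) * pdF m s f x else 0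

/-- The conjugate operator `∂_{x_0} - Σ_{1 ≤ s ≤ hi} v_s ∂_{x_s}` on functions on
`ℝ^{m+1}`; `Dbarop v m p` is `D̄_{x_p}`, `Dbarop v m m` is `D̄_x`. -/
noncomputable def Dbarop (v : ℕ → A) (m hi : ℕ) (f : (Fin (m + 1) → ℝ) → A)
    (x : Fin (m + 1) → ℝ) : A :=
  pdF m 0 f x -
    ∑ s : Fin (m + 1), if 1 ≤ (s : ℕ) ∧ (s : ℕ) ≤ hi then v (s : ℕ) * pdF m s f x else 0

/-- The operator `D_{x_p} = Σ_{s=0}^p v_s ∂_{x_s}` on functions on `ℝ^{p+1}`. -/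
noncomputable def DopP (v : ℕ → A) (p : ℕ) (g : (Fin (p + 1) → ℝ) → A)
    (y : Fin (p + 1) → ℝ) : A :=
  ∑ s : Fin (p + 1), v (s : ℕ) * pdP p s g y

/-- The operator `D̄_{x_p} = ∂_{x_0} - Σ_{s=1}^p v_s ∂_{x_s}` on functions on `ℝ^{p+1}`. -/
noncomputable def DbaropP (v : ℕ → A) (p : ℕ) (g : (Fin (p + 1) → ℝ) → A)
    (y : Fin (p + 1) → ℝ) : A :=
  pdP p 0 g y - ∑ s : Fin (p + 1), if 1 ≤ (s : ℕ) then v (s : ℕ) * pdP p s g y else 0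

/-- The operator `D_{x_p}` on functions on `ℝ^{p+2} = ℝ^{p+1} × ℝ`. -/
noncomputable def DopSx (v : ℕ → A) (p : ℕ) (G : (Fin (p + 1) → ℝ) × ℝ → A)
    (z : (Fin (p + 1) → ℝ) × ℝ) : A :=
  ∑ s : Fin (p + 1), v (s : ℕ) * pdSx p s G z

/-- The operator `D̄_{x_p}` on functions on `ℝ^{p+2} = ℝ^{p+1} × ℝ`. -/
noncomputable def DbaropSx (v : ℕ → A) (p : ℕ) (G : (Fin (p + 1) → ℝ) × ℝ → A)
    (z : (Fin (p + 1) → ℝ) × ℝ) : A :=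
  pdSx p 0 G z - ∑ s : Fin (p + 1), if 1 ≤ (s : ℕ) then v (s : ℕ) * pdSx p s G z else 0

/-- The Laplacian `Δ_x` on functions on `ℝ^{m+1}`. -/
noncomputable def lapF (m : ℕ) (f : (Fin (m + 1) → ℝ) → A)
    (x : Fin (m + 1) → ℝ) : A :=
  ∑ s : Fin (m + 1), pdF m s (pdF m s f) x

/-- The Laplacian `Δ_{x_p}` on functions on `ℝ^{p+1}`. -/
noncomputable def lapP (p : ℕ) (g : (Fin (p + 1) → ℝ) → A)
    (y : Fin (p + 1) → ℝ) : A :=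
  ∑ s : Fin (p + 1), pdP p s (pdP p s g) y

/-- Iterated Laplacian `Δ_x^k`. -/
noncomputable def lapIterF (m k : ℕ) (f : (Fin (m + 1) → ℝ) → A) :
    (Fin (m + 1) → ℝ) → A :=
  (fun g => lapF m g)^[k] f

/-- Iterated Laplacian `Δ_{x_p}^k`. -/
noncomputable def lapIterP (p k : ℕ) (g : (Fin (p + 1) → ℝ) → A) :
    (Fin (p + 1) → ℝ) → A :=
  (fun h => lapP p h)^[k] g

/-- The Laplacian `Δ_{x'} = Δ_{x_p} + ∂_r²` on functions on `ℝ^{p+2}`. -/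
noncomputable def lapSx (p : ℕ) (G : (Fin (p + 1) → ℝ) × ℝ → A)
    (z : (Fin (p + 1) → ℝ) × ℝ) : A :=
  (∑ s : Fin (p + 1), pdSx p s (pdSx p s G) z) + pdSr2 p G z

/-- The slice Cauchy-Riemann operator `D_ω = D_{x_p} + ω ∂_r` applied to a function
on `ℝ^{p+2}`, where `ω` is given in coordinates by `w`. -/
noncomputable def DomCR (v : ℕ → A) (m p : ℕ) (w : Fin (m + 1) → ℝ)
    (G : (Fin (p + 1) → ℝ) × ℝ → A) (z : (Fin (p + 1) → ℝ) × ℝ) : A :=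
  DopSx v p G z + emb v m w * pdSr p G z

/-- `f` is left generalized partial-slice monogenic (of type `(p, m-p)`) on `Ω`. -/
def GSM (v : ℕ → A) (m p : ℕ) (f : (Fin (m + 1) → ℝ) → A)
    (Ω : Set (Fin (m + 1) → ℝ)) : Prop :=
  ∀ w ∈ Sph v m p, ContDiffOn ℝ 1 (sliceFun m p f w) (sliceSet m p Ω w) ∧
    ∀ z ∈ sliceSet m p Ω w, DomCR v m p w (sliceFun m p f w) z = 0

/-- `Ω` is partially symmetric with respect to `ℝ^{p+1}`. -/
def PSym (v : ℕ → A) (m p : ℕ) (Ω : Set (Fin (m + 1) → ℝ)) : Prop :=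
  ∀ x ∈ Ω, ∀ w ∈ Sph v m p, xppart m p x + rad m p x • w ∈ Ω

/-- `Ω` is a slice domain: a domain meeting `ℝ^{p+1}` all of whose slices are
domains in `ℝ^{p+2}`. -/
def SliceDomain (v : ℕ → A) (m p : ℕ) (Ω : Set (Fin (m + 1) → ℝ)) : Prop :=
  IsOpen Ω ∧ IsConnected Ω ∧ (∃ x ∈ Ω, xqpart m p x = 0) ∧
    ∀ w ∈ Sph v m p, IsConnected (sliceSet m p Ω w)

/-- The reflection `(x_p, r) ↦ (x_p, -r)` of `ℝ^{p+2}`. -/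
def reflD (p : ℕ) (z : (Fin (p + 1) → ℝ) × ℝ) : (Fin (p + 1) → ℝ) × ℝ := (z.1, -z.2)

/-- The p-symmetric completion `Ω_D ⊆ M` of `D ⊆ ℝ^{p+2}`. -/
def OmegaD (v : ℕ → A) (m p : ℕ) (D : Set ((Fin (p + 1) → ℝ) × ℝ)) :
    Set (Fin (m + 1) → ℝ) :=
  {x | ∃ w ∈ Sph v m p, ∃ z ∈ D, x = pt m p w z.1 z.2}

/-- `(F₁, F₂)` satisfies the even-odd (stem function) conditions on `D`. -/
def IsStem (p : ℕ) (D : Set ((Fin (p + 1) → ℝ) × ℝ))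
    (F₁ F₂ : (Fin (p + 1) → ℝ) × ℝ → A) : Prop :=
  ∀ z ∈ D, F₁ (reflD p z) = F₁ z ∧ F₂ (reflD p z) = -F₂ z

/-- `f` is the generalized partial-slice function induced by the stem `(F₁, F₂)`:
`f(x_p + rω) = F₁(x_p, r) + ω F₂(x_p, r)`. -/
def Induced (v : ℕ → A) (m p : ℕ) (D : Set ((Fin (p + 1) → ℝ) × ℝ))
    (F₁ F₂ : (Fin (p + 1) → ℝ) × ℝ → A) (f : (Fin (m + 1) → ℝ) → A) : Prop :=
  ∀ w ∈ Sph v m p, ∀ z ∈ D, f (pt m p w z.1 z.2) = F₁ z + emb v m w * F₂ z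

/-- The generalized Cauchy-Riemann system for the stem `(F₁, F₂)` on `D`. -/
def StemCR (v : ℕ → A) (p : ℕ) (D : Set ((Fin (p + 1) → ℝ) × ℝ))
    (F₁ F₂ : (Fin (p + 1) → ℝ) × ℝ → A) : Prop :=
  ∀ z ∈ D, DopSx v p F₁ z - pdSr p F₂ z = 0 ∧ DbaropSx v p F₂ z + pdSr p F₁ z = 0

/-- `f` is generalized partial-slice regular on `Ω_D`. -/
def MemGSR (v : ℕ → A) (m p : ℕ) (D : Set ((Fin (p + 1) → ℝ) × ℝ))
    (f : (Fin (m + 1) → ℝ) → A) : Prop :=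
  ∃ F₁ F₂ : (Fin (p + 1) → ℝ) × ℝ → A, IsStem p D F₁ F₂ ∧
    ContDiffOn ℝ 1 F₁ D ∧ ContDiffOn ℝ 1 F₂ D ∧
    Induced v m p D F₁ F₂ f ∧ StemCR v p D F₁ F₂

/-- `f` is a generalized partial-slice function on `Ω`. -/
def MemGS (v : ℕ → A) (m p : ℕ) (Ω : Set (Fin (m + 1) → ℝ))
    (f : (Fin (m + 1) → ℝ) → A) : Prop :=
  ∃ F₁ F₂ : (Fin (p + 1) → ℝ) × ℝ → A,
    (∀ z : (Fin (p + 1) → ℝ) × ℝ, F₁ (reflD p z) = F₁ z ∧ F₂ (reflD p z) = -F₂ z) ∧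
    ∀ x ∈ Ω, f x = F₁ (projP m p x, rad m p x) +
      emb v m (normq m p x) * F₂ (projP m p x, rad m p x)

/-- Non-associative power: `a^n` with products taken from the right. -/
def apow (a : A) (n : ℕ) : A := (fun b => a * b)^[n] 1

/-- Partial even part `PE[f](x) = (f(x) + f(x_⋄))/2`. -/
noncomputable def PE (m p : ℕ) (f : (Fin (m + 1) → ℝ) → A)
    (x : Fin (m + 1) → ℝ) : A := (2 : ℝ)⁻¹ • (f x + f (reflP m p x))

/-- Partial odd part `PO[f](x) = (f(x) - f(x_⋄))/2`. -/
noncomputable def PO (m p : ℕ) (f : (Fin (m + 1) → ℝ) → A)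
    (x : Fin (m + 1) → ℝ) : A := (2 : ℝ)⁻¹ • (f x - f (reflP m p x))

/-- `Ω₀* = {x_p + x_q : x_p ∈ Ω₀, x_q ∈ ℝ^q}`. -/
def Omega0star (m p : ℕ) (Ω₀ : Set (Fin (p + 1) → ℝ)) : Set (Fin (m + 1) → ℝ) :=
  {x | projP m p x ∈ Ω₀}

/-- The spherical derivative `f'_s(x) = (1/2) x_q⁻¹ (f(x) - f(x_⋄))`
(using `x_q⁻¹ = -x_q/|x_q|²`). -/
noncomputable def sder (v : ℕ → A) (m p : ℕ) (f : (Fin (m + 1) → ℝ) → A)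
    (x : Fin (m + 1) → ℝ) : A :=
  -(((2 : ℝ) * rad m p x ^ 2)⁻¹) • (emb v m (xqpart m p x) * (f x - f (reflP m p x)))

/-- The spherical Dirac operator
`Γ f = -(1/2) Σ_{p+1 ≤ i,j ≤ m} v_i (v_j (L_{ij} f))`. -/
noncomputable def sphericalGamma (v : ℕ → A) (m p : ℕ) (f : (Fin (m + 1) → ℝ) → A)
    (x : Fin (m + 1) → ℝ) : A :=
  -((2 : ℝ)⁻¹) • ∑ i : Fin (m + 1), ∑ j : Fin (m + 1),
    if p < (i : ℕ) ∧ p < (j : ℕ) then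
      v (i : ℕ) * (v (j : ℕ) * (x i • pdF m j f x - x j • pdF m i f x)) else 0

/-- The slice Cauchy-Riemann operator `D_ω` applied to (the slice restriction of) a
function `f` on `M`, at the point `x` (with `ω = x_q/|x_q|`). -/
noncomputable def DomCRat (v : ℕ → A) (m p : ℕ) (f : (Fin (m + 1) → ℝ) → A)
    (x : Fin (m + 1) → ℝ) : A :=
  DomCR v m p (normq m p x) (sliceFun m p f (normq m p x)) (projP m p x, rad m p x)

/-- `f` is left monogenic on `Ω`: `f ∈ C¹` and `D_x f = 0`. -/
def Monogenic (v : ℕ → A) (m : ℕ) (f : (Fin (m + 1) → ℝ) → A)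
    (Ω : Set (Fin (m + 1) → ℝ)) : Prop :=
  ContDiffOn ℝ 1 f Ω ∧ ∀ x ∈ Ω, Dop v m 0 m f x = 0

/-- `f` is harmonic on `Ω`: `f ∈ C²` and `Δ_x f = 0`. -/
def Harmonic (m : ℕ) (f : (Fin (m + 1) → ℝ) → A)
    (Ω : Set (Fin (m + 1) → ℝ)) : Prop :=
  ContDiffOn ℝ 2 f Ω ∧ ∀ x ∈ Ω, lapF m f x = 0

/-- A family of functions converges normally (locally a summable uniform bound). -/
def NormallyConvOn {E F : Type*} [TopologicalSpace E] [NormedAddCommGroup F]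
    (u : ℕ → E → F) (s : Set E) : Prop :=
  ∀ x ∈ s, ∃ U ∈ nhds x, ∃ c : ℕ → ℝ, Summable c ∧ ∀ k : ℕ, ∀ y ∈ U, ‖u k y‖ ≤ c k

/-- The generalized partial-slice CK-extension
`CK[f₀](x) = Σ_k (r^{2k}/(2k)!)(-Δ_{x_p})^k f₀(x_p)
  + ω Σ_k (r^{2k+1}/(2k+1)!)(-Δ_{x_p})^k (D_{x_p} f₀)(x_p)`. -/
noncomputable def CKe (v : ℕ → A) (m p : ℕ) (f₀ : (Fin (p + 1) → ℝ) → A)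
    (x : Fin (m + 1) → ℝ) : A :=
  (∑' k : ℕ, (((-1 : ℝ) ^ k * rad m p x ^ (2 * k)) / (2 * k).factorial) •
      lapIterP p k f₀ (projP m p x)) +
  emb v m (normq m p x) *
    ∑' k : ℕ, (((-1 : ℝ) ^ k * rad m p x ^ (2 * k + 1)) / (2 * k + 1).factorial) •
      lapIterP p k (DopP v p f₀) (projP m p x)

/-- The coefficient `Γ(q/2)(-1)^k r^{2k} / (2^{2k} k! Γ(k + q/2))`. -/
noncomputable def hgckC (q k : ℕ) (r : ℝ) : ℝ :=
  (Real.Gamma ((q : ℝ) / 2) * (-1) ^ k * r ^ (2 * k)) /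
    (2 ^ (2 * k) * (k.factorial : ℝ) * Real.Gamma ((k : ℝ) + (q : ℝ) / 2))

/-- The coefficient `Γ(q/2)(-1)^k r^{2k} / (2^{2k+1} k! Γ(k + q/2 + 1))`. -/
noncomputable def gckC' (q k : ℕ) (r : ℝ) : ℝ :=
  (Real.Gamma ((q : ℝ) / 2) * (-1) ^ k * r ^ (2 * k)) /
    (2 ^ (2 * k + 1) * (k.factorial : ℝ) * Real.Gamma ((k : ℝ) + (q : ℝ) / 2 + 1))

/-- The coefficient `Γ(q/2 + 1)(-1)^k r^{2k} / (2^{2k} k! Γ(k + q/2 + 1))`. -/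
noncomputable def hgckC' (q k : ℕ) (r : ℝ) : ℝ :=
  (Real.Gamma ((q : ℝ) / 2 + 1) * (-1) ^ k * r ^ (2 * k)) /
    (2 ^ (2 * k) * (k.factorial : ℝ) * Real.Gamma ((k : ℝ) + (q : ℝ) / 2 + 1))

/-- The monogenic generalized CK-extension `GCK[A₀]`. -/
noncomputable def GCKe (v : ℕ → A) (m p : ℕ) (A₀ : (Fin (p + 1) → ℝ) → A)
    (x : Fin (m + 1) → ℝ) : A :=
  (∑' k : ℕ, hgckC (m - p) k (rad m p x) • lapIterP p k A₀ (projP m p x)) +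
  emb v m (xqpart m p x) *
    ∑' k : ℕ, gckC' (m - p) k (rad m p x) • lapIterP p k (DopP v p A₀) (projP m p x)

/-- The harmonic generalized CK-extension `HGCK[A₀, A₁]`. -/
noncomputable def HGCKe (v : ℕ → A) (m p : ℕ) (A₀ A₁ : (Fin (p + 1) → ℝ) → A)
    (x : Fin (m + 1) → ℝ) : A :=
  (∑' k : ℕ, hgckC (m - p) k (rad m p x) • lapIterP p k A₀ (projP m p x)) +
  emb v m (xqpart m p x) *
    ∑' k : ℕ, hgckC' (m - p) k (rad m p x) • lapIterP p k A₁ (projP m p x)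

/-- The operator `(1/r)∂_r`, extended to `r = 0` by its limit `∂_r²` (on even
functions). -/
noncomputable def T1 (p : ℕ) (G : (Fin (p + 1) → ℝ) × ℝ → A) :
    (Fin (p + 1) → ℝ) × ℝ → A := fun z =>
  if z.2 = 0 then pdSr2 p G z else (z.2)⁻¹ • pdSr p G z

/-- The operator `∂_r ∘ (1/r)`, extended to `r = 0` by its limit `(1/2)∂_r²` (on odd
functions). -/
noncomputable def T2 (p : ℕ) (G : (Fin (p + 1) → ℝ) × ℝ → A) :
    (Fin (p + 1) → ℝ) × ℝ → A := fun z =>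
  if z.2 = 0 then (2 : ℝ)⁻¹ • pdSr2 p G z
  else fderiv ℝ (fun t : ℝ => t⁻¹ • G (z.1, t)) z.2 1

/-- `C_q(k) = (q-1)(q-3)⋯(q-2k+1)`, `C_q(0) = 1`. -/
noncomputable def cq (q k : ℕ) : ℝ :=
  ∏ i ∈ Finset.range k, ((q : ℝ) - (2 * (i : ℝ) + 1))

/-- Double factorial. -/
def dfac : ℕ → ℕ
  | 0 => 1
  | 1 => 1
  | n + 2 => (n + 2) * dfac n

/-- The Fueter-Sce constant `γ_q = (-1)^{(q-1)/2} (q-1)!!/(q-2)!!`. -/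
noncomputable def gammaQ (q : ℕ) : ℝ :=
  (-1 : ℝ) ^ ((q - 1) / 2) * (dfac (q - 1) : ℝ) / (dfac (q - 2) : ℝ)

/-!
The system for `F = (F₁, F₂)` is a constant coefficient first order system `∑ᵢ σ(eᵢ) ∂ᵢ F = 0`
whose symbol is inverted by a conjugate symbol, `σ'(x) σ(x) = |x|²`, as alternativity makes
`v_s (v_t a) + v_t (v_s a) = -2 δ_st a`. Hence `|x|⁻ⁿ σ'(x)` is a fundamental solution, and pairing
`F` with its regularisation `(ε + |x|²)^(-n/2) σ'(x)` as `ε → 0` yields a Cauchy formula which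
expresses `F` near a point through its values on an annulus around it, so that `F` is analytic.
Applying the conjugate operator to the system gives `Δ F = 0`. Finally an even analytic function
of `r` is an analytic function of `r²`, and an odd one is `r` times such a function; since
`r² = |x_q|²` and `r ω = x_q`, the induced function is analytic also across `r = 0`.
-/

open MeasureTheory Metric Set
open scoped NNReal ENNReal ContDiff

theorem exists_nnreal_add_self_lt {R : ℝ≥0∞} (hR : 0 < R) :
    ∃ r : ℝ≥0, 0 < r ∧ r ≤ 1 ∧ (r + r : ℝ≥0∞) < R := by
  obtain ⟨ρ, hρ0, hρR⟩ := ENNReal.lt_iff_exists_nnreal_btwn.1 hR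
  have hρ : 0 < ρ / 2 := half_pos (ENNReal.coe_pos.1 hρ0)
  refine ⟨min (ρ / 2) 1, lt_min hρ one_pos, min_le_right _ _, hρR.trans_le' ?_⟩
  have : min (ρ / 2) 1 + min (ρ / 2) 1 ≤ ρ :=
    (add_le_add (min_le_left _ _) (min_le_left _ _)).trans_eq (add_halves ρ)
  exact_mod_cast this

section AnalyticFamilies

variable {E F : Type*} [NormedAddCommGroup E] [NormedSpace ℝ E] [NormedAddCommGroup F]
  [NormedSpace ℝ F]

theorem norm_apply_diag_le_of_mem_eball {r : ℝ≥0} {y : E} (hy : y ∈ eball (0 : E) r) {n : ℕ}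
    (p : E [×n]→L[ℝ] F) : ‖p fun _ => y‖ ≤ ‖p‖ * (r : ℝ) ^ n := by
  have hy' : ‖y‖ ≤ r := by
    rw [mem_eball_zero_iff, enorm_eq_nnnorm] at hy
    exact_mod_cast hy.le
  simpa using p.le_opNorm_mul_pow_of_le (m := fun _ => y) (b := r) (pi_norm_const_le y |>.trans hy')

variable [CompleteSpace F]

theorem hasFPowerSeriesOnBall_tsum {ι : Type*} {f : ι → E → F}
    {P : ι → FormalMultilinearSeries ℝ E F} {x : E} {r : ℝ≥0} (hr : 0 < r)
    (hf : ∀ i, HasFPowerSeriesOnBall (f i) (P i) x r)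
    (hsum : ∀ i, Summable fun n => ‖P i n‖ * (r : ℝ) ^ n)
    (hsum' : Summable fun i => ∑' n, ‖P i n‖ * (r : ℝ) ^ n) :
    HasFPowerSeriesOnBall (fun y => ∑' i, f i y) (fun n => ∑' i, P i n) x r := by
  have hsum_prod : Summable fun q : ι × ℕ => ‖P q.1 q.2‖ * (r : ℝ) ^ q.2 :=
    (summable_prod_of_nonneg fun q => by positivity).2 ⟨hsum, hsum'⟩
  have hsum_coeff (n : ℕ) : Summable fun i => ‖P i n‖ :=
    (summable_mul_right_iff (pow_ne_zero n (by exact_mod_cast hr.ne' : (r : ℝ) ≠ 0))).1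
      (hsum_prod.prod_symm.prod_factor n)
  refine ⟨FormalMultilinearSeries.le_radius_of_summable_norm _ ?_, by exact_mod_cast hr,
    fun {y} hy => ?_⟩
  · refine hsum_prod.prod_symm.prod.of_nonneg_of_le (fun n => by positivity) fun n => ?_
    exact (mul_le_mul_of_nonneg_right (norm_tsum_le_tsum_norm (hsum_coeff n))
      (by positivity)).trans_eq tsum_mul_right.symm
  · have hsum_apply : Summable fun q : ι × ℕ => P q.1 q.2 fun _ => y :=
      .of_norm_bounded hsum_prod fun q => norm_apply_diag_le_of_mem_eball hy _
    have apply_tsum (n : ℕ) : (∑' i, P i n) (fun _ => y) = ∑' i, P i n fun _ => y :=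
      (ContinuousMultilinearMap.apply ℝ (fun _ : Fin n => E) F fun _ => y).map_tsum
        (hsum_coeff n).of_norm
    have hcomm : ∑' i, f i (x + y) = ∑' n, ∑' i, P i n fun _ => y := by
      simp only [fun i => ((hf i).hasSum hy).tsum_eq.symm]
      exact (hsum_apply.tsum_comm (f := fun i n => P i n fun _ => y)).symm
    simp only [apply_tsum, hcomm]
    exact hsum_apply.prod_symm.prod.hasSum

variable {T : Type*} [MeasurableSpace T]

theorem hasFPowerSeriesOnBall_integral {μ : Measure T} {f : T → E → F}
    {P : T → FormalMultilinearSeries ℝ E F} {x : E} {r : ℝ≥0} (hr : 0 < r)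
    (hf : ∀ᵐ t ∂μ, HasFPowerSeriesOnBall (f t) (P t) x r)
    (hint : ∀ n, Integrable (fun t => P t n) μ)
    (hsum : Summable fun n => (∫ t, ‖P t n‖ ∂μ) * (r : ℝ) ^ n) :
    HasFPowerSeriesOnBall (fun y => ∫ t, f t y ∂μ) (fun n => ∫ t, P t n ∂μ) x r := by
  refine ⟨FormalMultilinearSeries.le_radius_of_summable_norm _ ?_, by exact_mod_cast hr,
    fun {y} hy => ?_⟩
  · refine hsum.of_nonneg_of_le (fun n => by positivity) fun n => ?_
    gcongr
    exact norm_integral_le_integral_norm _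
  · let evalDiag (n : ℕ) := ContinuousMultilinearMap.apply ℝ (fun _ : Fin n => E) F fun _ => y
    have hint_apply (n : ℕ) : Integrable (fun t => P t n fun _ => y) μ :=
      (evalDiag n).integrable_comp (hint n)
    have apply_integral (n : ℕ) : (∫ t, P t n ∂μ) (fun _ => y) = ∫ t, P t n (fun _ => y) ∂μ :=
      ((evalDiag n).integral_comp_comm (hint n)).symm
    have hsum_apply : Summable fun n => ∫ t, ‖P t n fun _ => y‖ ∂μ :=
      hsum.of_nonneg_of_le (fun n => by positivity) fun n => by
        rw [← integral_mul_const]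
        exact integral_mono (hint_apply n).norm ((hint n).norm.mul_const _)
          fun t => norm_apply_diag_le_of_mem_eball hy _
    simp only [apply_integral]
    convert hasSum_integral_of_summable_integral_norm hint_apply hsum_apply using 1
    exact integral_congr_ae (hf.mono fun t ht => (ht.hasSum hy).tsum_eq.symm)

end AnalyticFamilies

section ChangeOrigin

variable {E F : Type*} [NormedAddCommGroup E] [NormedSpace ℝ E] [NormedAddCommGroup F]
  [NormedSpace ℝ F] {p : FormalMultilinearSeries ℝ E F} {r r' : ℝ≥0}

theorem summable_norm_changeOriginSeries_mul_pow (hr : r < p.radius) (k : ℕ) :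
    Summable fun l => ‖p.changeOriginSeries k l‖ * (r : ℝ) ^ l := by
  simpa only [NNReal.coe_mul, NNReal.coe_pow, coe_nnnorm] using
    NNReal.summable_coe.2 (p.changeOriginSeries_summable_aux₃ hr k)

theorem summable_tsum_norm_changeOriginSeries (hr : (r + r' : ℝ≥0∞) < p.radius) :
    Summable fun k => (∑' l, ‖p.changeOriginSeries k l‖ * (r : ℝ) ^ l) * (r' : ℝ) ^ k := by
  have hr_lt : r < p.radius := le_self_add.trans_lt hr
  have hsum : Summable fun k => (∑' l, ‖p.changeOriginSeries k l‖₊ * r ^ l) * r' ^ k := by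
    refine NNReal.summable_of_le (fun k => ?_)
      (NNReal.summable_sigma.1 (p.changeOriginSeries_summable_aux₁ hr)).2
    change _ ≤ ∑' s : Σ l : ℕ, { s : Finset (Fin (k + l)) // s.card = l },
      ‖p (k + s.1)‖₊ * r ^ s.1 * r' ^ k
    rw [NNReal.tsum_mul_right]
    gcongr
    have haux := p.changeOriginSeries_summable_aux₂ hr_lt k
    refine hasSum_le (fun l => ?_) (p.changeOriginSeries_summable_aux₃ hr_lt k).hasSum
      (haux.hasSum.sigma fun l => ((NNReal.summable_sigma.1 haux).1 l).hasSum)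
    refine le_of_le_of_eq ?_ (NNReal.tsum_mul_right (fun _ => ‖p (k + l)‖₊) (r ^ l)).symm
    gcongr
    exact p.nnnorm_changeOriginSeries_le_tsum k l
  simpa only [NNReal.coe_mul, NNReal.coe_pow, NNReal.coe_tsum, coe_nnnorm] using
    NNReal.summable_coe.2 hsum

theorem norm_changeOrigin_le_tsum {x : E} (hx : ‖x‖ ≤ r) (hr : r < p.radius) (k : ℕ) :
    ‖p.changeOrigin x k‖ ≤ ∑' l, ‖p.changeOriginSeries k l‖ * (r : ℝ) ^ l :=
  tsum_of_norm_bounded (summable_norm_changeOriginSeries_mul_pow hr k).hasSum fun l => by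
    simpa using (p.changeOriginSeries k l).le_opNorm_mul_pow_of_le (m := fun _ => x)
      ((pi_norm_const_le x).trans hx)

end ChangeOrigin

section ParametricIntegral

variable {W G F T : Type*} [NormedAddCommGroup W] [NormedSpace ℝ W] [NormedAddCommGroup G]
  [NormedSpace ℝ G] [NormedAddCommGroup F] [NormedSpace ℝ F] [CompleteSpace F]
  [TopologicalSpace T] [MeasurableSpace T] [BorelSpace T] {μ : Measure T}
  [IsFiniteMeasureOnCompacts μ] {S : Set T} {K : W × G → F} {x₀ : W} {τ : T → G}

theorem eventually_integrableOn_of_analyticAt (hS : IsCompact S) (hSm : MeasurableSet S)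
    (hτ : Continuous τ) (hK : ∀ t ∈ S, AnalyticAt ℝ K (x₀, τ t)) :
    ∀ᶠ x in 𝓝 x₀, IntegrableOn (fun t => K (x, τ t)) S μ := by
  have hev : ∀ᶠ x in 𝓝 x₀, ∀ t ∈ S, AnalyticAt ℝ K (x, τ t) :=
    hS.eventually_forall_of_forall_eventually fun t ht =>
      ((continuous_fst.prodMk (hτ.comp continuous_snd)).tendsto (x₀, t)).eventually
        (hK t ht).eventually_analyticAt
  filter_upwards [hev] with x hx
  exact ContinuousOn.integrableOn_compact' hS hSm fun t ht =>
    ((hx t ht).continuousAt.comp (f := fun t => (x, τ t)) (by fun_prop)).continuousWithinAt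

variable [SecondCountableTopology T]

theorem analyticAt_integral_add {ν : Measure T} [IsFiniteMeasure ν]
    {K : W → F} {p : FormalMultilinearSeries ℝ W F} {w : W} {r : ℝ≥0} {R : ℝ≥0∞} (hr : 0 < r)
    (hK : HasFPowerSeriesOnBall K p w R) (hrR : (r + r : ℝ≥0∞) < R) {σ : T → W}
    (hσ : Continuous σ) (hσr : ∀ᵐ t ∂ν, ‖σ t‖ ≤ r) :
    AnalyticAt ℝ (fun y => ∫ t, K (y + σ t) ∂ν) w := by
  have hrad : (r + r : ℝ≥0∞) < p.radius := hrR.trans_le hK.r_le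
  have hrad' : (r : ℝ≥0∞) < p.radius := le_self_add.trans_lt hrad
  have henorm {t : T} (ht : ‖σ t‖ ≤ r) : (‖σ t‖₊ : ℝ≥0∞) ≤ r := by exact_mod_cast ht
  have hmeas (k : ℕ) : AEStronglyMeasurable (fun t => p.changeOrigin (σ t) k) ν := by
    rw [← Measure.restrict_eq_self_of_ae_mem hσr]
    refine ContinuousOn.aestronglyMeasurable ?_ (isClosed_le hσ.norm continuous_const).measurableSet
    refine (p.hasFPowerSeriesOnBall_changeOrigin k (bot_le.trans_lt hrad')).continuousOn.comp
      hσ.continuousOn fun t ht => ?_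
    rw [mem_eball_zero_iff]
    exact (henorm ht).trans_lt hrad'
  have hbound (k : ℕ) : ∀ᵐ t ∂ν, ‖p.changeOrigin (σ t) k‖ ≤
      ∑' l, ‖p.changeOriginSeries k l‖ * (r : ℝ) ^ l :=
    hσr.mono fun t ht => norm_changeOrigin_le_tsum ht hrad' k
  refine (hasFPowerSeriesOnBall_integral (P := fun t => p.changeOrigin (σ t)) hr ?_
    (fun k => .of_bound (hmeas k) _ (hbound k)) ?_).analyticAt
  · filter_upwards [hσr] with t ht
    have hexp := (hK.changeOrigin ((henorm ht).trans_lt (le_self_add.trans_lt hrR))).comp_sub (-σ t)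
    simp only [add_neg_cancel_right, sub_neg_eq_add] at hexp
    refine hexp.mono (by exact_mod_cast hr) (ENNReal.le_sub_of_add_le_right (by simp) ?_)
    exact (add_le_add_right (henorm ht) _).trans hrR.le
  · refine ((summable_tsum_norm_changeOriginSeries hrad).mul_left (ν.real univ)).of_nonneg_of_le
      (fun k => by positivity) fun k => ?_
    rw [← mul_assoc]
    gcongr
    refine (integral_mono_ae (Integrable.of_bound (hmeas k) _ (hbound k)).norm
      (integrable_const _) (hbound k)).trans_eq ?_
    rw [integral_const, smul_eq_mul]

theorem exists_open_analyticAt_setIntegral (hS : IsCompact S) (hτ : Continuous τ) {t₀ : T}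
    (hK : AnalyticAt ℝ K (x₀, τ t₀)) :
    ∃ U, IsOpen U ∧ t₀ ∈ U ∧ ∀ V ⊆ U ∩ S, MeasurableSet V →
      AnalyticAt ℝ (fun x => ∫ t in V, K (x, τ t) ∂μ) x₀ := by
  obtain ⟨p, R, hp⟩ := hK
  obtain ⟨r, hr, -, hrR⟩ := exists_nnreal_add_self_lt hp.r_pos
  let σ : T → W × G := fun t => (0, τ t - τ t₀)
  have hσ : Continuous σ := by fun_prop
  refine ⟨{t | ‖σ t‖ < r}, isOpen_lt hσ.norm continuous_const,
    by simpa [σ] using hr, fun V hVU hV => ?_⟩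
  have : IsFiniteMeasure (μ.restrict V) :=
    ⟨by simpa using (measure_mono (hVU.trans inter_subset_right)).trans_lt hS.measure_lt_top⟩
  have hlocal := analyticAt_integral_add (ν := μ.restrict V) hr hp hrR hσ
    ((ae_restrict_mem hV).mono fun t ht => (hVU ht).1.le)
  refine (hlocal.comp_of_eq (f := fun x => (x, τ t₀)) (by fun_prop) rfl).congr ?_
  exact .of_forall fun x => by simp [σ]

theorem analyticAt_setIntegral (hS : IsCompact S) (hSm : MeasurableSet S) (hτ : Continuous τ)
    (hK : ∀ t ∈ S, AnalyticAt ℝ K (x₀, τ t)) :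
    AnalyticAt ℝ (fun x => ∫ t in S, K (x, τ t) ∂μ) x₀ := by
  suffices hlocal : ∃ U, IsOpen U ∧ S ⊆ U ∧ ∀ V ⊆ U ∩ S, MeasurableSet V →
      AnalyticAt ℝ (fun x => ∫ t in V, K (x, τ t) ∂μ) x₀ by
    obtain ⟨U, -, hSU, hU⟩ := hlocal
    exact hU S (subset_inter hSU subset_rfl) hSm
  refine hS.induction_on (p := fun s => ∃ U, IsOpen U ∧ s ⊆ U ∧ ∀ V ⊆ U ∩ S, MeasurableSet V →
      AnalyticAt ℝ (fun x => ∫ t in V, K (x, τ t) ∂μ) x₀) ?empty ?mono ?union ?nhds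
  case empty =>
    refine ⟨∅, isOpen_empty, subset_rfl, fun V hV _ => ?_⟩
    simp [subset_empty_iff.1 (hV.trans_eq (empty_inter S)), analyticAt_const]
  case mono =>
    rintro s s' hss' ⟨U, hUo, hsU, hU⟩
    exact ⟨U, hUo, hss'.trans hsU, hU⟩
  case union =>
    rintro s s' ⟨U, hUo, hsU, hU⟩ ⟨U', hU'o, hsU', hU'⟩
    refine ⟨U ∪ U', hUo.union hU'o, union_subset_union hsU hsU', fun V hV hVm => ?_⟩
    have hVS : V ⊆ S := hV.trans inter_subset_right
    refine ((hU (V ∩ U) (fun t ht => ⟨ht.2, hVS ht.1⟩) (hVm.inter hUo.measurableSet)).add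
      (hU' (V \ U) (fun t ht => ⟨(hV ht.1).1.resolve_left ht.2, hVS ht.1⟩)
        (hVm.diff hUo.measurableSet))).congr ?_
    filter_upwards [eventually_integrableOn_of_analyticAt (μ := μ) hS hSm hτ hK] with x hx
    exact integral_inter_add_sdiff hUo.measurableSet (hx.mono_set hVS)
  case nhds =>
    intro t ht
    obtain ⟨U, hUo, htU, hU⟩ := exists_open_analyticAt_setIntegral (μ := μ) hS hτ (hK t ht)
    exact ⟨U, mem_nhdsWithin_of_mem_nhds (hUo.mem_nhds htU), U, hUo, subset_rfl, hU⟩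

end ParametricIntegral

section PowersOfFunctional

variable {E B : Type*} [NormedAddCommGroup E] [NormedSpace ℝ E] [NormedAddCommGroup B]
  [NormedSpace ℝ B]

/-- The power series at `x` of `z ↦ φ (z - x) • f z`, where `p` is the power series of `f` at `x`
and `φ` is a continuous linear functional. -/
noncomputable def smulSeries (φ : E →L[ℝ] ℝ) (p : FormalMultilinearSeries ℝ E B) :
    FormalMultilinearSeries ℝ E B :=
  ((ContinuousLinearMap.smulRightL ℝ E B φ).compFormalMultilinearSeries p).unshift 0

variable {φ : E →L[ℝ] ℝ} {f : E → B} {p : FormalMultilinearSeries ℝ E B} {x : E} {r : ℝ≥0}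

theorem hasFPowerSeriesOnBall_smulSeries (hf : HasFPowerSeriesOnBall f p x r) :
    HasFPowerSeriesOnBall (fun z => φ (z - x) • f z) (smulSeries φ p) x r := by
  simpa [smulSeries] using
    ((ContinuousLinearMap.smulRightL ℝ E B φ).comp_hasFPowerSeriesOnBall hf).unshift (z := 0)

theorem norm_smulSeries_zero : ‖smulSeries φ p 0‖ = 0 := by
  simp [smulSeries, FormalMultilinearSeries.unshift]

theorem norm_smulSeries_succ_le (n : ℕ) : ‖smulSeries φ p (n + 1)‖ ≤ ‖φ‖ * ‖p n‖ := by
  refine (LinearIsometryEquiv.norm_map _ _).trans_le ?_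
  refine (ContinuousLinearMap.norm_compContinuousMultilinearMap_le _ _).trans ?_
  gcongr
  exact ContinuousLinearMap.opNorm_le_bound _ (norm_nonneg _) fun b =>
    (ContinuousLinearMap.norm_smulRight_apply φ b).le

theorem norm_smulSeries_succ_mul_pow_le (n : ℕ) :
    ‖smulSeries φ p (n + 1)‖ * (r : ℝ) ^ (n + 1) ≤ ‖φ‖ * r * (‖p n‖ * (r : ℝ) ^ n) := by
  calc ‖smulSeries φ p (n + 1)‖ * (r : ℝ) ^ (n + 1)
      ≤ ‖φ‖ * ‖p n‖ * (r : ℝ) ^ (n + 1) := by gcongr; exact norm_smulSeries_succ_le n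
    _ = ‖φ‖ * r * (‖p n‖ * (r : ℝ) ^ n) := by ring

theorem summable_norm_smulSeries (hp : Summable fun n => ‖p n‖ * (r : ℝ) ^ n) :
    Summable fun n => ‖smulSeries φ p n‖ * (r : ℝ) ^ n :=
  (summable_nat_add_iff 1).1 <| (hp.mul_left (‖φ‖ * r)).of_nonneg_of_le (fun n => by positivity)
    norm_smulSeries_succ_mul_pow_le

theorem tsum_norm_smulSeries_le (hp : Summable fun n => ‖p n‖ * (r : ℝ) ^ n) :
    ∑' n, ‖smulSeries φ p n‖ * (r : ℝ) ^ n ≤ ‖φ‖ * r * ∑' n, ‖p n‖ * (r : ℝ) ^ n := by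
  have hsum := summable_norm_smulSeries (φ := φ) hp
  rw [hsum.tsum_eq_zero_add, norm_smulSeries_zero, zero_mul, zero_add, ← tsum_mul_left]
  exact ((summable_nat_add_iff 1).2 hsum).tsum_le_tsum norm_smulSeries_succ_mul_pow_le
    (hp.mul_left _)

theorem exists_hasFPowerSeriesOnBall_pow_smul (φ : E →L[ℝ] ℝ) (hf : HasFPowerSeriesOnBall f p x r)
    (hp : Summable fun n => ‖p n‖ * (r : ℝ) ^ n) (k : ℕ) :
    ∃ q : FormalMultilinearSeries ℝ E B,
      HasFPowerSeriesOnBall (fun z => φ (z - x) ^ k • f z) q x r ∧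
      Summable (fun n => ‖q n‖ * (r : ℝ) ^ n) ∧
      ∑' n, ‖q n‖ * (r : ℝ) ^ n ≤ (‖φ‖ * r) ^ k * ∑' n, ‖p n‖ * (r : ℝ) ^ n := by
  induction k with
  | zero => exact ⟨p, by simpa using hf, hp, by simp⟩
  | succ k ih =>
    obtain ⟨q, hq, hq_sum, hq_le⟩ := ih
    refine ⟨smulSeries φ q, ?_, summable_norm_smulSeries hq_sum,
      (tsum_norm_smulSeries_le hq_sum).trans ?_⟩
    · simpa only [smul_smul, ← pow_succ'] using hasFPowerSeriesOnBall_smulSeries (φ := φ) hq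
    · rw [pow_succ', mul_assoc (‖φ‖ * r)]
      exact mul_le_mul_of_nonneg_left hq_le (mul_nonneg (norm_nonneg φ) r.2)

theorem analyticAt_tsum_pow_smul [CompleteSpace B] (φ : E →L[ℝ] ℝ) {b : ℕ → E → B}
    {P : ℕ → FormalMultilinearSeries ℝ E B} (hb : ∀ k, HasFPowerSeriesOnBall (b k) (P k) x r)
    (hsum : ∀ k, Summable fun n => ‖P k n‖ * (r : ℝ) ^ n)
    (hsum' : Summable fun k => (‖φ‖ * r) ^ k * ∑' n, ‖P k n‖ * (r : ℝ) ^ n) :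
    AnalyticAt ℝ (fun z => ∑' k, φ (z - x) ^ k • b k z) x := by
  choose q hq hq_sum hq_le using fun k =>
    exists_hasFPowerSeriesOnBall_pow_smul φ (hb k) (hsum k) k
  exact (hasFPowerSeriesOnBall_tsum (by exact_mod_cast (hb 0).r_pos) hq hq_sum
    (hsum'.of_nonneg_of_le (fun k => by positivity) hq_le)).analyticAt

end PowersOfFunctional

section EvenOddSplitting

variable {E B : Type*} [NormedAddCommGroup E]

theorem tendsto_snd_neg (x : E) :
    Tendsto (fun z : E × ℝ => (z.1, -z.2)) (𝓝 (x, 0)) (𝓝 (x, 0)) := by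
  simpa using (continuous_fst.prodMk continuous_snd.neg).tendsto (x, (0 : ℝ))

variable [NormedSpace ℝ E] [NormedAddCommGroup B] [NormedSpace ℝ B]

theorem exists_analyticAt_sq_of_pos {f : E × ℝ → B} {z₀ : E × ℝ} (hf : AnalyticAt ℝ f z₀)
    (hpos : 0 < z₀.2) :
    ∃ g : E × ℝ → B, AnalyticAt ℝ g (z₀.1, z₀.2 ^ 2) ∧ ∀ᶠ z in 𝓝 z₀, f z = g (z.1, z.2 ^ 2) := by
  have hsqrt : AnalyticAt ℝ Real.sqrt (z₀.2 ^ 2) :=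
    (Real.contDiffAt_sqrt (pow_ne_zero 2 hpos.ne')).analyticAt
  refine ⟨fun w => f (w.1, √w.2), hf.comp_of_eq (f := fun w : E × ℝ => (w.1, √w.2))
    (analyticAt_fst.prod (hsqrt.comp_of_eq analyticAt_snd rfl)) ?_, ?_⟩
  · simp [Real.sqrt_sq hpos.le]
  · filter_upwards [continuousAt_snd.eventually_const_lt hpos] with z hz
    simp [Real.sqrt_sq hz.le]

variable [CompleteSpace B] {p : FormalMultilinearSeries ℝ (E × ℝ) B} {x₀ : E}

/-- The coefficient of `s ^ k` in the expansion at `s = 0` of `p.sum (v, s)`. -/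
noncomputable def sndCoeff (p : FormalMultilinearSeries ℝ (E × ℝ) B) (k : ℕ) (v : E) : B :=
  p.changeOrigin (v, 0) k fun _ => (0, 1)

theorem hasSum_pow_smul_sndCoeff {f : E × ℝ → B} {R : ℝ≥0∞}
    (hf : HasFPowerSeriesOnBall f p (x₀, 0) R) {z : E × ℝ}
    (hz : (‖z.1 - x₀‖₊ + ‖z.2‖₊ : ℝ≥0∞) < R) :
    HasSum (fun k => z.2 ^ k • sndCoeff p k (z.1 - x₀)) (f z) := by
  have hfst : ‖((z.1 - x₀, 0) : E × ℝ)‖₊ = ‖z.1 - x₀‖₊ := by simp [Prod.nnnorm_def]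
  have hsnd : ((0, z.2) : E × ℝ) ∈ eball 0 (R - ‖((z.1 - x₀, 0) : E × ℝ)‖₊) := by
    rw [mem_eball_zero_iff, hfst, enorm_eq_nnnorm, lt_tsub_iff_left]
    simpa [Prod.nnnorm_def] using hz
  have hsum := (hf.changeOrigin (y := (z.1 - x₀, 0))
    (by rw [hfst]; exact le_self_add.trans_lt hz)).hasSum hsnd
  convert hsum using 2 with k
  · rw [show ((0, z.2) : E × ℝ) = z.2 • (0, 1) by simp]
    simp only [sndCoeff, ContinuousMultilinearMap.map_smul_univ, Finset.prod_const,
      Finset.card_univ, Fintype.card_fin]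
  · simp

theorem exists_hasFPowerSeriesOnBall_sndCoeff (x₀ : E) {r : ℝ≥0} (hr0 : 0 < r) (hr : r < p.radius)
    (k : ℕ) :
    ∃ q : FormalMultilinearSeries ℝ (E × ℝ) B,
      HasFPowerSeriesOnBall (fun z => sndCoeff p k (z.1 - x₀)) q (x₀, 0) r ∧
      ∀ l, ‖q l‖ ≤ ‖p.changeOriginSeries k l‖ := by
  let toFst : E × ℝ →L[ℝ] E × ℝ := (ContinuousLinearMap.inl ℝ E ℝ).comp (.fst ℝ E ℝ)
  let evalSnd := ContinuousMultilinearMap.apply ℝ (fun _ : Fin k => E × ℝ) B fun _ => (0, 1)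
  have htoFst : ‖toFst‖ ≤ 1 := toFst.opNorm_le_bound zero_le_one fun z => by
    simpa [toFst] using norm_fst_le z
  have hevalSnd : ‖evalSnd‖ ≤ 1 := evalSnd.opNorm_le_bound zero_le_one fun g => by
    simpa [evalSnd] using g.le_opNorm fun _ => (0, 1)
  have hexp : HasFPowerSeriesOnBall (fun x => p.changeOrigin x k) (p.changeOriginSeries k)
      (toFst 0) p.radius := by
    simpa using p.hasFPowerSeriesOnBall_changeOrigin k (bot_le.trans_lt hr)
  have hradius : (r : ℝ≥0∞) ≤ p.radius / ‖toFst‖ₑ :=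
    hr.le.trans <|
      (ENNReal.le_div_iff_mul_le (.inr (bot_le.trans_lt hr).ne') (.inl (by simp))).2 <|
      mul_le_of_le_one_right' (by rw [enorm_eq_nnnorm]; exact_mod_cast htoFst)
  refine ⟨evalSnd.compFormalMultilinearSeries
    ((p.changeOriginSeries k).compContinuousLinearMap toFst), ?_, fun l => ?_⟩
  · simpa [toFst, evalSnd, Function.comp_def, sndCoeff] using
      (evalSnd.comp_hasFPowerSeriesOnBall (hexp.compContinuousLinearMap.mono
        (by exact_mod_cast hr0) hradius)).comp_sub (x₀, 0)
  · calc _ ≤ ‖evalSnd‖ * ‖(p.changeOriginSeries k).compContinuousLinearMap toFst l‖ :=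
          ContinuousLinearMap.norm_compContinuousMultilinearMap_le _ _
      _ ≤ 1 * (‖p.changeOriginSeries k l‖ * ∏ _i : Fin l, ‖toFst‖) := by
          gcongr
          exact ContinuousMultilinearMap.norm_compContinuousLinearMap_le _ _
      _ ≤ ‖p.changeOriginSeries k l‖ := by
          rw [one_mul, Finset.prod_const]
          exact mul_le_of_le_one_right (by positivity) (pow_le_one₀ (norm_nonneg _) htoFst)

theorem analyticAt_tsum_pow_smul_sndCoeff (x₀ : E) (hp : 0 < p.radius) (j : ℕ) :
    AnalyticAt ℝ (fun z : E × ℝ => ∑' k, z.2 ^ k • sndCoeff p (2 * k + j) (z.1 - x₀)) (x₀, 0) := by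
  obtain ⟨r, hr0, hr1, hrr⟩ := exists_nnreal_add_self_lt hp
  let ρ := r ^ 2
  have hρr : ρ ≤ r := pow_le_of_le_one zero_le hr1 two_ne_zero
  have hρ : (ρ : ℝ≥0∞) < p.radius :=
    (ENNReal.coe_le_coe.2 hρr).trans_lt (le_self_add.trans_lt hrr)
  choose q hq hq_le using fun k =>
    exists_hasFPowerSeriesOnBall_sndCoeff x₀ (pow_pos hr0 2 : 0 < ρ) hρ (2 * k + j)
  have hterm_le (k n : ℕ) : ‖q k n‖ * (ρ : ℝ) ^ n ≤
      ‖p.changeOriginSeries (2 * k + j) n‖ * (r : ℝ) ^ n := by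
    gcongr
    exact hq_le k n
  have hsum (k : ℕ) := summable_norm_changeOriginSeries_mul_pow
    (le_self_add.trans_lt hrr) (2 * k + j)
  have hq_sum (k : ℕ) : Summable fun n => ‖q k n‖ * (ρ : ℝ) ^ n :=
    (hsum k).of_nonneg_of_le (fun n => by positivity) (hterm_le k)
  have hinj : Function.Injective fun k => 2 * k + j := fun a b h => by grind
  have htail := ((summable_tsum_norm_changeOriginSeries hrr).comp_injective hinj).mul_right
    ((r : ℝ) ^ j)⁻¹
  refine (analyticAt_tsum_pow_smul (.snd ℝ E ℝ) hq hq_sum <| htail.of_nonneg_of_le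
    (fun k => by positivity) fun k => ?_).congr (.of_forall fun z => by simp)
  have hsnd : ‖ContinuousLinearMap.snd ℝ E ℝ‖ * ρ ≤ (r : ℝ) ^ 2 :=
    mul_le_of_le_one_left (by positivity) (ContinuousLinearMap.norm_snd_le ℝ E ℝ)
  calc (‖ContinuousLinearMap.snd ℝ E ℝ‖ * ρ) ^ k * ∑' n, ‖q k n‖ * (ρ : ℝ) ^ n
      ≤ ((r : ℝ) ^ 2) ^ k * ∑' n, ‖p.changeOriginSeries (2 * k + j) n‖ * (r : ℝ) ^ n := by
        gcongr with n
        · exact hq_sum k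
        · exact hsum k
        · exact hq_le k n
    _ = (∑' n, ‖p.changeOriginSeries (2 * k + j) n‖ * (r : ℝ) ^ n) * (r : ℝ) ^ (2 * k + j) *
          ((r : ℝ) ^ j)⁻¹ := by
        have : (r : ℝ) ^ j ≠ 0 := pow_ne_zero j (by exact_mod_cast hr0.ne')
        rw [pow_add, ← pow_mul]
        field_simp

theorem tsum_pow_smul_eq_even_add_odd {r : ℝ} {a : ℕ → B} (ha : Summable fun k => r ^ k • a k) :
    ∑' k, r ^ k • a k =
      ∑' k, (r ^ 2) ^ k • a (2 * k + 0) + r • ∑' k, (r ^ 2) ^ k • a (2 * k + 1) := by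
  have heven : Summable fun k => r ^ (2 * k) • a (2 * k) :=
    ha.comp_injective (mul_right_injective₀ two_ne_zero)
  have hodd : Summable fun k => r ^ (2 * k + 1) • a (2 * k + 1) :=
    ha.comp_injective (i := fun k => 2 * k + 1) fun k l h => by grind
  have hsplit : ∑' k, r ^ k • a k =
      ∑' k, r ^ (2 * k) • a (2 * k) + ∑' k, r ^ (2 * k + 1) • a (2 * k + 1) :=
    (tsum_even_add_odd (f := fun k => r ^ k • a k) heven hodd).symm
  rw [hsplit, ← tsum_const_smul'']
  simp only [smul_smul, ← pow_mul, ← pow_succ', add_zero]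

theorem exists_analyticAt_add_snd_smul {f : E × ℝ → B} (hf : AnalyticAt ℝ f (x₀, 0)) :
    ∃ g h : E × ℝ → B, AnalyticAt ℝ g (x₀, 0) ∧ AnalyticAt ℝ h (x₀, 0) ∧
      ∀ᶠ z in 𝓝 (x₀, 0), f z = g (z.1, z.2 ^ 2) + z.2 • h (z.1, z.2 ^ 2) := by
  obtain ⟨p, R, hp⟩ := hf
  have hpart (j : ℕ) := analyticAt_tsum_pow_smul_sndCoeff x₀ (hp.r_pos.trans_le hp.r_le) j
  have hcont : Continuous fun z : E × ℝ => (‖z.1 - x₀‖₊ + ‖z.2‖₊ : ℝ≥0∞) := by fun_prop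
  have hnear : ∀ᶠ z : E × ℝ in 𝓝 (x₀, 0), (‖z.1 - x₀‖₊ + ‖z.2‖₊ : ℝ≥0∞) < R :=
    (hcont.tendsto (x₀, 0)).eventually_lt_const (by simpa using hp.r_pos)
  refine ⟨_, _, hpart 0, hpart 1, hnear.mono fun z hz => ?_⟩
  have hsum := hasSum_pow_smul_sndCoeff hp hz
  exact hsum.tsum_eq.symm.trans (tsum_pow_smul_eq_even_add_odd hsum.summable)

theorem exists_analyticAt_sq_of_even {f : E × ℝ → B} {z₀ : E × ℝ} (hf : AnalyticAt ℝ f z₀)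
    (hnonneg : 0 ≤ z₀.2) (heven : ∀ᶠ z in 𝓝 z₀, f (z.1, -z.2) = f z) :
    ∃ g : E × ℝ → B, AnalyticAt ℝ g (z₀.1, z₀.2 ^ 2) ∧ ∀ᶠ z in 𝓝 z₀, f z = g (z.1, z.2 ^ 2) := by
  obtain hpos | hzero := hnonneg.lt_or_eq
  · exact exists_analyticAt_sq_of_pos hf hpos
  obtain ⟨x, s⟩ := z₀
  obtain rfl : 0 = s := hzero
  obtain ⟨g, h, hg, -, hsplit⟩ := exists_analyticAt_add_snd_smul hf
  refine ⟨g, by simpa using hg, ?_⟩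
  filter_upwards [heven, hsplit, (tendsto_snd_neg x).eventually hsplit] with z hz hpos hneg
  rw [hz, neg_sq, neg_smul] at hneg
  linear_combination (norm := module) (1 / 2 : ℝ) • hpos + (1 / 2 : ℝ) • hneg

theorem exists_analyticAt_sq_of_odd {f : E × ℝ → B} {z₀ : E × ℝ} (hf : AnalyticAt ℝ f z₀)
    (hnonneg : 0 ≤ z₀.2) (hodd : ∀ᶠ z in 𝓝 z₀, f (z.1, -z.2) = -f z) :
    ∃ g : E × ℝ → B, AnalyticAt ℝ g (z₀.1, z₀.2 ^ 2) ∧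
      ∀ᶠ z in 𝓝 z₀, f z = z.2 • g (z.1, z.2 ^ 2) := by
  obtain hpos | hzero := hnonneg.lt_or_eq
  · obtain ⟨g, hg, hfg⟩ := exists_analyticAt_sq_of_pos
      (f := fun z => z.2⁻¹ • f z) ((analyticAt_snd.inv hpos.ne').smul hf) hpos
    refine ⟨g, hg, ?_⟩
    filter_upwards [hfg, continuousAt_snd.eventually_const_lt hpos] with z hz hz0
    rw [← hz, smul_inv_smul₀ hz0.ne']
  obtain ⟨x, s⟩ := z₀
  obtain rfl : 0 = s := hzero
  obtain ⟨g, h, -, hh, hsplit⟩ := exists_analyticAt_add_snd_smul hf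
  refine ⟨h, by simpa using hh, ?_⟩
  filter_upwards [hodd, hsplit, (tendsto_snd_neg x).eventually hsplit] with z hz hpos hneg
  rw [hz, neg_sq, neg_smul] at hneg
  linear_combination (norm := module) (1 / 2 : ℝ) • hpos - (1 / 2 : ℝ) • hneg

end EvenOddSplitting

section ApproximateIdentity

variable {V : Type*} [NormedAddCommGroup V]

theorem tendsto_norm_pow_mul_rpow_one_add_norm_sq (n : ℕ) :
    Tendsto (fun x : V => ‖x‖ ^ n * (1 + ‖x‖ ^ 2) ^ (-(n + 2 : ℝ) / 2))
      (Bornology.cobounded V) (𝓝 0) := by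
  have hinv : Tendsto (fun x : V => (1 + ‖x‖ ^ 2)⁻¹) (Bornology.cobounded V) (𝓝 0) :=
    tendsto_inv_atTop_zero.comp <| tendsto_atTop_add_const_left _ _ <|
      (tendsto_pow_atTop two_ne_zero).comp tendsto_norm_cobounded_atTop
  refine squeeze_zero (fun x => by positivity) (fun x => ?_) hinv
  have hpos : 0 < 1 + ‖x‖ ^ 2 := by positivity
  have hnorm : ‖x‖ ^ n ≤ (1 + ‖x‖ ^ 2) ^ (n / 2 : ℝ) := by
    calc ‖x‖ ^ n = (‖x‖ ^ 2) ^ (n / 2 : ℝ) := by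
          rw [← Real.rpow_natCast_mul (norm_nonneg x), Nat.cast_ofNat,
            mul_div_cancel₀ _ (two_ne_zero' ℝ), Real.rpow_natCast]
      _ ≤ _ := by gcongr; linarith
  calc ‖x‖ ^ n * (1 + ‖x‖ ^ 2) ^ (-(n + 2 : ℝ) / 2)
      ≤ (1 + ‖x‖ ^ 2) ^ (n / 2 : ℝ) * (1 + ‖x‖ ^ 2) ^ (-(n + 2 : ℝ) / 2) := by gcongr
    _ = (1 + ‖x‖ ^ 2)⁻¹ := by
      rw [← Real.rpow_add hpos, ← Real.rpow_neg_one]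
      ring_nf

variable [NormedSpace ℝ V]

/-- The profile of an approximate identity on `V`: after normalisation of its integral, the dilates
`c ^ n * mollifier (c • x)`, `n = dim V`, tend to the Dirac mass at `0` as `c → ∞`. -/
noncomputable def mollifier (x : V) : ℝ :=
  (1 + ‖x‖ ^ 2) ^ (-(Module.finrank ℝ V + 2 : ℝ) / 2)

theorem mollifier_pos (x : V) : 0 < mollifier x := Real.rpow_pos_of_pos (by positivity) _

theorem pow_finrank_mul_mollifier_smul {c : ℝ} (hc : 0 < c) (x : V) :
    c ^ Module.finrank ℝ V * mollifier (c • x) =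
      (c ^ 2)⁻¹ * ((c ^ 2)⁻¹ + ‖x‖ ^ 2) ^ (-(Module.finrank ℝ V : ℝ) / 2 - 1) := by
  have hbase : 1 + ‖c • x‖ ^ 2 = c ^ 2 * ((c ^ 2)⁻¹ + ‖x‖ ^ 2) := by
    rw [norm_smul, mul_pow, Real.norm_eq_abs, sq_abs]
    field_simp
  have hscale : c ^ Module.finrank ℝ V * (c ^ 2) ^ (-(Module.finrank ℝ V : ℝ) / 2 - 1) =
      (c ^ 2)⁻¹ := by
    rw [← Real.rpow_natCast_mul hc.le, ← Real.rpow_natCast, ← Real.rpow_add hc,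
      ← Real.rpow_natCast, ← Real.rpow_neg hc.le]
    push_cast
    ring_nf
  rw [mollifier, hbase,
    show -(Module.finrank ℝ V + 2 : ℝ) / 2 = -(Module.finrank ℝ V : ℝ) / 2 - 1 by ring,
    Real.mul_rpow (by positivity) (by positivity), ← mul_assoc, hscale]

variable [FiniteDimensional ℝ V] [MeasurableSpace V] [BorelSpace V] (μ : Measure V)
  [μ.IsAddHaarMeasure]

theorem integrable_mollifier : Integrable (mollifier (V := V)) μ :=
  integrable_rpow_neg_one_add_norm_sq (by linarith)

theorem integral_mollifier_pos : 0 < ∫ x : V, mollifier x ∂μ := by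
  rw [integral_pos_iff_support_of_nonneg (fun x => (mollifier_pos x).le) (integrable_mollifier μ),
    Function.support_eq_univ fun x => (mollifier_pos x).ne']
  exact isOpen_univ.measure_pos μ univ_nonempty

theorem tendsto_integral_mollifier_smul {B : Type*} [NormedAddCommGroup B] [NormedSpace ℝ B]
    [CompleteSpace B] {g : V → B} (hg : Integrable g μ) (hg0 : ContinuousAt g 0) :
    Tendsto (fun c : ℝ => ∫ x, (c ^ Module.finrank ℝ V * mollifier (c • x)) • g x ∂μ) atTop
      (𝓝 ((∫ x : V, mollifier x ∂μ) • g 0)) := by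
  set C := ∫ x : V, mollifier x ∂μ
  have hC : 0 < C := integral_mollifier_pos μ
  have hlim := tendsto_integral_comp_smul_smul_of_integrable (μ := μ)
    (φ := fun x => C⁻¹ * mollifier x)
    (fun x => mul_nonneg (inv_nonneg.2 hC.le) (mollifier_pos x).le)
    (by rw [integral_const_mul, inv_mul_cancel₀ hC.ne'])
    (by simpa only [mollifier, mul_left_comm, mul_zero] using
      (tendsto_norm_pow_mul_rpow_one_add_norm_sq _).const_mul C⁻¹) hg hg0
  refine (hlim.const_smul C).congr fun c => ?_
  rw [← integral_smul]
  congr 1 with x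
  rw [smul_smul]
  congr 1
  field_simp

end ApproximateIdentity

section DiracOperator

variable {ι V B : Type*} [Fintype ι] [NormedAddCommGroup V] [NormedAddCommGroup B]
  [NormedSpace ℝ B]

/-- The constant-coefficient first order operator `∑ i, σ (b i) ∂_{b i}` with symbol `σ`, along a
finite family of directions `b`. -/
noncomputable def diracOp [NormedSpace ℝ V] (b : ι → V) (σ : V →L[ℝ] B →L[ℝ] B) (w : V → B)
    (y : V) : B :=
  ∑ i, σ (b i) (fderiv ℝ w y (b i))

theorem continuous_diracOp [NormedSpace ℝ V] {b : ι → V} {σ : V →L[ℝ] B →L[ℝ] B} {w : V → B}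
    (hw : ContDiff ℝ 1 w) : Continuous (diracOp b σ w) := by
  have := hw.continuous_fderiv one_ne_zero
  unfold diracOp
  fun_prop

theorem tsupport_diracOp_subset [NormedSpace ℝ V] (b : ι → V) (σ : V →L[ℝ] B →L[ℝ] B) (w : V → B) :
    tsupport (diracOp b σ w) ⊆ tsupport w := by
  have hsupp : Function.support (diracOp b σ w) ⊆ Function.support (fderiv ℝ w) :=
    fun x hx h => hx (by simp [diracOp, h])
  exact (closure_mono hsupp).trans (tsupport_fderiv_subset ℝ)

theorem diracOp_congr [NormedSpace ℝ V] {b : ι → V} {σ : V →L[ℝ] B →L[ℝ] B} {w w' : V → B} {y : V}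
    (hw : w =ᶠ[𝓝 y] w') : diracOp b σ w y = diracOp b σ w' y := by
  simp only [diracOp, hw.fderiv_eq]

variable [InnerProductSpace ℝ V]

/-- The kernel `(ε + ‖x‖²) ^ (-n / 2) • σ' x`, `n = dim V`. For `ε = 0` it is, up to a constant, the
fundamental solution of the operator `diracOp e σ` whose symbol satisfies
`σ' x (σ x b) = ‖x‖² • b`; for `ε > 0` it is a smooth regularisation. -/
noncomputable def cauchyKernel (σ' : V →L[ℝ] B →L[ℝ] B) (ε : ℝ) (x : V) : B →L[ℝ] B :=
  (ε + ‖x‖ ^ 2) ^ (-(Module.finrank ℝ V : ℝ) / 2) • σ' x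

variable {σ σ' : V →L[ℝ] B →L[ℝ] B} {ε : ℝ} {x : V}

theorem contDiffAt_cauchyKernel {n : WithTop ℕ∞} (hx : 0 < ε + ‖x‖ ^ 2) :
    ContDiffAt ℝ n (cauchyKernel σ' ε) x :=
  ((contDiffAt_const.add (contDiff_norm_sq ℝ).contDiffAt).rpow_const_of_ne hx.ne').smul
    σ'.contDiff.contDiffAt

theorem contDiff_cauchyKernel {n : WithTop ℕ∞} (hε : 0 < ε) : ContDiff ℝ n (cauchyKernel σ' ε) :=
  contDiff_iff_contDiffAt.2 fun x => contDiffAt_cauchyKernel (by positivity)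

theorem fderiv_cauchyKernel_apply (hx : 0 < ε + ‖x‖ ^ 2) (v : V) :
    fderiv ℝ (cauchyKernel σ' ε) x v =
      (ε + ‖x‖ ^ 2) ^ (-(Module.finrank ℝ V : ℝ) / 2 - 1) •
        ((ε + ‖x‖ ^ 2) • σ' v - (Module.finrank ℝ V * inner ℝ x v) • σ' x) := by
  have hsq : HasFDerivAt (fun y : V => ε + ‖y‖ ^ 2) (2 • innerSL ℝ x) x :=
    (hasStrictFDerivAt_norm_sq x).hasFDerivAt.const_add ε
  have hkernel := (hsq.rpow_const (p := -(Module.finrank ℝ V : ℝ) / 2) (.inl hx.ne')).smul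
    σ'.hasFDerivAt
  change HasFDerivAt (cauchyKernel σ' ε) _ x at hkernel
  rw [hkernel.fderiv]
  simp only [Real.rpow_sub_one hx.ne', add_apply, smul_apply, ContinuousLinearMap.smulRight_apply,
    coe_innerSL_apply, nsmul_eq_mul, Nat.cast_ofNat, smul_eq_mul, smul_sub]
  match_scalars <;> field_simp

theorem analyticAt_cauchyKernel_apply [CompleteSpace B] {z y : V} {b : B} (hyz : y ≠ z) :
    AnalyticAt ℝ (fun q : V × V × B => cauchyKernel σ' 0 (q.2.1 - q.1) q.2.2) (z, y, b) := by
  have hK : AnalyticAt ℝ (cauchyKernel σ' 0) (y - z) :=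
    (contDiffAt_cauchyKernel (by have := sub_ne_zero.2 hyz; positivity)).analyticAt
  have hsub :=
    ((ContinuousLinearMap.fst ℝ V B).comp (.snd ℝ V (V × B)) - .fst ℝ V (V × B)).analyticAt
      (z, y, b)
  have hvec := ((ContinuousLinearMap.snd ℝ V B).comp (.snd ℝ V (V × B))).analyticAt (z, y, b)
  exact ((ContinuousLinearMap.id ℝ (B →L[ℝ] B)).analyticAt_bilinear _).comp₂
    (hK.comp_of_eq hsub rfl) hvec

variable (e : OrthonormalBasis ι ℝ V)

theorem sum_fderiv_cauchyKernel (hσ : ∀ x b, σ' x (σ x b) = ‖x‖ ^ 2 • b) (hx : 0 < ε + ‖x‖ ^ 2)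
    (b : B) :
    ∑ i, fderiv ℝ (cauchyKernel σ' ε) x (e i) (σ (e i) b) =
      (Module.finrank ℝ V * ε * (ε + ‖x‖ ^ 2) ^ (-(Module.finrank ℝ V : ℝ) / 2 - 1)) • b := by
  have hexpand : ∑ i, inner ℝ x (e i) • σ (e i) b = σ x b := by
    conv_rhs => rw [← e.sum_repr' x]
    simp [real_inner_comm]
  have hcross : ∑ i, (Module.finrank ℝ V * inner ℝ x (e i) : ℝ) • σ' x (σ (e i) b) =
      (Module.finrank ℝ V * ‖x‖ ^ 2 : ℝ) • b := by
    rw [mul_smul, ← hσ, ← hexpand]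
    simp only [mul_smul, Finset.smul_sum, map_sum, map_smul]
  have hdiag : ∑ i, (ε + ‖x‖ ^ 2) • σ' (e i) (σ (e i) b) =
      (Module.finrank ℝ V * (ε + ‖x‖ ^ 2) : ℝ) • b := by
    simp [hσ, e.orthonormal.norm_eq_one, Module.finrank_eq_card_basis e.toBasis, mul_smul,
      Nat.cast_smul_eq_nsmul]
  simp only [fderiv_cauchyKernel_apply hx, smul_apply,
    sub_apply, ← Finset.smul_sum, Finset.sum_sub_distrib, hcross, hdiag]
  module

section CauchyFormula

variable [FiniteDimensional ℝ V] [MeasurableSpace V] [BorelSpace V] (μ : Measure V)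
  [μ.IsAddHaarMeasure] {w : V → B}

theorem integral_cauchyKernel_diracOp (hσ : ∀ x b, σ' x (σ x b) = ‖x‖ ^ 2 • b) (hε : 0 < ε)
    (hw : ContDiff ℝ 1 w) (hw_supp : HasCompactSupport w) :
    ∫ x, cauchyKernel σ' ε x (diracOp e σ w x) ∂μ =
      -∫ x, (Module.finrank ℝ V * ε *
        (ε + ‖x‖ ^ 2) ^ (-(Module.finrank ℝ V : ℝ) / 2 - 1)) • w x ∂μ := by
  have hK : ContDiff ℝ 1 (cauchyKernel σ' ε) := contDiff_cauchyKernel hε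
  have hK_cont := hK.continuous
  have := hK.continuous_fderiv one_ne_zero
  have hw_cont := hw.continuous
  have := hw.continuous_fderiv one_ne_zero
  have hright (i : ι) :
      Integrable (fun x => cauchyKernel σ' ε x (σ (e i) (fderiv ℝ w x (e i)))) μ :=
    Continuous.integrable_of_hasCompactSupport (by fun_prop)
      ((hw_supp.fderiv ℝ).mono fun x hx h => hx (by simp [h]))
  have hleft (i : ι) :
      Integrable (fun x => fderiv ℝ (cauchyKernel σ' ε) x (e i) (σ (e i) (w x))) μ :=
    Continuous.integrable_of_hasCompactSupport (by fun_prop)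
      (hw_supp.mono fun x hx h => hx (by simp [h]))
  have hprod (i : ι) : Integrable (fun x => cauchyKernel σ' ε x (σ (e i) (w x))) μ :=
    Continuous.integrable_of_hasCompactSupport (by fun_prop)
      (hw_supp.mono fun x hx h => hx (by simp [h]))
  have hparts (i : ι) := integral_bilinear_fderiv_right_eq_neg_left_of_integrable (μ := μ)
    (B := (ContinuousLinearMap.compL ℝ B B B).flip (σ (e i))) (hleft i) (hright i) (hprod i)
    (fun x _ => (hK.differentiable one_ne_zero) x) (fun x _ => (hw.differentiable one_ne_zero) x)
  simp only [ContinuousLinearMap.flip_apply, ContinuousLinearMap.compL_apply,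
    ContinuousLinearMap.comp_apply] at hparts
  simp only [diracOp, map_sum]
  rw [integral_finsetSum _ fun i _ => hright i]
  simp only [hparts, Finset.sum_neg_distrib, ← integral_finsetSum _ fun i _ => hleft i]
  have hpos (x : V) : 0 < ε + ‖x‖ ^ 2 := by positivity
  simp only [sum_fderiv_cauchyKernel e hσ (hpos _)]

theorem tendsto_integral_cauchyKernel {h : V → B} (hh : Continuous h)
    (hh_supp : HasCompactSupport h) (hh0 : h =ᶠ[𝓝 0] 0) :
    Tendsto (fun c : ℝ => ∫ x, cauchyKernel σ' (c ^ 2)⁻¹ x (h x) ∂μ) atTop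
      (𝓝 (∫ x, cauchyKernel σ' 0 x (h x) ∂μ)) := by
  obtain ⟨δ, hδ, hball⟩ := Metric.eventually_nhds_iff.1 hh0
  have hfar {x : V} (hx : h x ≠ 0) : δ ≤ ‖x‖ := by
    by_contra! hlt
    exact hx (hball (by simpa using hlt))
  have hexp : -(Module.finrank ℝ V : ℝ) / 2 ≤ 0 := by simp [div_nonpos_iff]
  refine tendsto_integral_filter_of_dominated_convergence
    (fun x => (δ ^ 2) ^ (-(Module.finrank ℝ V : ℝ) / 2) * ‖σ' x (h x)‖) ?measurable ?bound
    ?integrable ?lim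
  case measurable =>
    filter_upwards [eventually_gt_atTop 0] with c hc
    have := (contDiff_cauchyKernel (σ' := σ') (n := 0) (inv_pos.2 (pow_pos hc 2))).continuous
    fun_prop
  case bound =>
    refine .of_forall fun c => .of_forall fun x => ?_
    obtain hx | hx := eq_or_ne (h x) 0
    · simp [hx]
    have hle : δ ^ 2 ≤ (c ^ 2)⁻¹ + ‖x‖ ^ 2 :=
      (pow_le_pow_left₀ hδ.le (hfar hx) 2).trans (le_add_of_nonneg_left (by positivity))
    rw [cauchyKernel, smul_apply, norm_smul, Real.norm_of_nonneg (by positivity)]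
    gcongr ?_ * _
    exact Real.rpow_le_rpow_of_nonpos (by positivity) hle hexp
  case integrable =>
    exact Continuous.integrable_of_hasCompactSupport (by fun_prop)
      (hh_supp.mono fun x hx hx0 => hx (by simp [hx0]))
  case lim =>
    refine .of_forall fun x => ?_
    obtain hx | hx := eq_or_ne (h x) 0
    · simp [hx]
    have hbase : Tendsto (fun c : ℝ => (c ^ 2)⁻¹ + ‖x‖ ^ 2) atTop (𝓝 (0 + ‖x‖ ^ 2)) :=
      (tendsto_inv_atTop_zero.comp (tendsto_pow_atTop two_ne_zero)).add_const _
    have hx_pos : 0 < ‖x‖ := hδ.trans_le (hfar hx)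
    exact (hbase.rpow_const (.inl (by positivity))).smul_const (σ' x (h x))

theorem smul_eq_neg_integral_cauchyKernel [CompleteSpace B]
    (hσ : ∀ x b, σ' x (σ x b) = ‖x‖ ^ 2 • b) (hw : ContDiff ℝ 1 w) (hw_supp : HasCompactSupport w)
    (hw0 : diracOp e σ w =ᶠ[𝓝 0] 0) :
    (Module.finrank ℝ V * ∫ x : V, mollifier x ∂μ) • w 0 =
      -∫ x, cauchyKernel σ' 0 x (diracOp e σ w x) ∂μ := by
  have hmoll := (tendsto_integral_mollifier_smul μ
    (hw.continuous.integrable_of_hasCompactSupport hw_supp) hw.continuous.continuousAt).const_smul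
      (Module.finrank ℝ V : ℝ)
  rw [mul_smul]
  refine tendsto_nhds_unique (hmoll.congr' ?_) (tendsto_integral_cauchyKernel μ
    (continuous_diracOp hw) (hw_supp.mono' ?_) hw0).neg
  · filter_upwards [eventually_gt_atTop 0] with c hc
    rw [integral_cauchyKernel_diracOp e μ hσ (inv_pos.2 (pow_pos hc 2)) hw hw_supp, neg_neg,
      ← integral_smul]
    simp only [smul_smul, pow_finrank_mul_mollifier_smul hc, mul_assoc]
  · exact subset_closure.trans (tsupport_diracOp_subset e σ w)

theorem cauchy_formula_diracOp [CompleteSpace B] (hσ : ∀ x b, σ' x (σ x b) = ‖x‖ ^ 2 • b)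
    (hw : ContDiff ℝ 1 w) (hw_supp : HasCompactSupport w) {z : V}
    (hz : diracOp e σ w =ᶠ[𝓝 z] 0) :
    (Module.finrank ℝ V * ∫ x : V, mollifier x ∂μ) • w z =
      -∫ y, cauchyKernel σ' 0 (y - z) (diracOp e σ w y) ∂μ := by
  have htranslate (x : V) : diracOp e σ (fun x => w (x + z)) x = diracOp e σ w (x + z) := by
    simp only [diracOp, fderiv_comp_add_right]
  have hnear : diracOp e σ (fun x => w (x + z)) =ᶠ[𝓝 0] 0 := by
    filter_upwards [((continuous_add_const z).tendsto' 0 z (zero_add z)).eventually hz] with x hx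
    rw [htranslate, hx, Pi.zero_apply, Pi.zero_apply]
  have hformula := smul_eq_neg_integral_cauchyKernel e μ hσ (w := fun x => w (x + z))
    (hw.comp (contDiff_id.add contDiff_const))
    (hw_supp.comp_homeomorph (Homeomorph.addRight z)) hnear
  simp only [htranslate, zero_add] at hformula
  rw [hformula, ← integral_add_right_eq_self (fun y => cauchyKernel σ' 0 (y - z) _) z]
  simp only [add_sub_cancel_right]

end CauchyFormula

theorem exists_contDiff_hasCompactSupport_eventuallyEq [FiniteDimensional ℝ V] {F : V → B}
    {U : Set V} {z : V} (hU : U ∈ 𝓝 z) (hF : ContDiffOn ℝ 1 F U) :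
    ∃ w, ContDiff ℝ 1 w ∧ HasCompactSupport w ∧ w =ᶠ[𝓝 z] F := by
  obtain ⟨R, hR, hRU⟩ := Metric.nhds_basis_ball.mem_iff.1 hU
  let η : ContDiffBump z := ⟨R / 3, R / 2, by positivity, by linarith⟩
  have hηU : tsupport η ⊆ ball z R := by
    rw [η.tsupport_eq]
    exact closedBall_subset_ball (half_lt_self hR)
  have hsupp : tsupport (fun y => η y • F y) ⊆ tsupport η :=
    closure_mono fun y hy h => hy (by simp [h])
  refine ⟨fun y => η y • F y, contMDiff_iff_contDiff.1 (contMDiff_of_tsupport fun y hy => ?_),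
    η.hasCompactSupport.smul_right, η.eventuallyEq_one.mono fun y hy => by simp [hy]⟩
  rw [contMDiffAt_iff_contDiffAt]
  exact η.contDiffAt.smul (hF.contDiffAt
    (mem_of_superset (isOpen_ball.mem_nhds (hηU (hsupp hy))) hRU))

theorem analyticAt_of_diracOp_eq_zero_of_orthonormal [CompleteSpace B]
    [FiniteDimensional ℝ V] [Nontrivial V] (hσ : ∀ x b, σ' x (σ x b) = ‖x‖ ^ 2 • b)
    {F : V → B} {U : Set V} {z : V} (hU : U ∈ 𝓝 z) (hF : ContDiffOn ℝ 1 F U)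
    (hF0 : ∀ᶠ y in 𝓝 z, diracOp e σ F y = 0) : AnalyticAt ℝ F z := by
  borelize V
  obtain ⟨w, hw, hw_supp, hwF⟩ := exists_contDiff_hasCompactSupport_eventuallyEq hU hF
  have hw0 : ∀ᶠ y in 𝓝 z, diracOp e σ w y = 0 := by
    filter_upwards [hF0, hwF.eventually_nhds] with y hy hwy
    rw [diracOp_congr hwy, hy]
  obtain ⟨O, hO, hO_open, hzO⟩ := _root_.eventually_nhds_iff.1 hw0
  let S := tsupport w \ O
  have hS : IsCompact S := hw_supp.isCompact.diff hO_open
  have hDw (y : V) (hy : y ∉ S) : diracOp e σ w y = 0 := by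
    by_contra h
    exact hy ⟨tsupport_diracOp_subset e σ w (subset_closure h), fun hyO => h (hO y hyO)⟩
  set C := Module.finrank ℝ V * ∫ x : V, mollifier x
  have hC : C ≠ 0 :=
    (mul_pos (Nat.cast_pos.2 Module.finrank_pos) (integral_mollifier_pos volume)).ne'
  have hint : AnalyticAt ℝ (fun x => ∫ y in S, cauchyKernel σ' 0 (y - x) (diracOp e σ w y)) z :=
    analyticAt_setIntegral (K := fun q : V × V × B => cauchyKernel σ' 0 (q.2.1 - q.1) q.2.2)
      (τ := fun y => (y, diracOp e σ w y)) hS hS.measurableSet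
      (continuous_id.prodMk (continuous_diracOp hw)) fun y hy =>
        analyticAt_cauchyKernel_apply fun hyz => hy.2 (hyz ▸ hzO)
  refine (hint.neg.const_smul (c := C⁻¹)).congr ?_
  filter_upwards [hwF, hO_open.mem_nhds hzO] with x hx hxO
  rw [← hx, ← inv_smul_smul₀ hC (w x), cauchy_formula_diracOp e volume hσ hw hw_supp
    (mem_of_superset (hO_open.mem_nhds hxO) hO),
    ← setIntegral_eq_integral_of_forall_compl_eq_zero fun y hy => by rw [hDw y hy, map_zero]]
  rfl

end DiracOperator

section CliffordSymbol

variable {ι V B : Type*} [Fintype ι] [NormedAddCommGroup V] [NormedSpace ℝ V]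
  [NormedAddCommGroup B] [NormedSpace ℝ B] (b : Module.Basis ι ℝ V) {σ σ' : V →L[ℝ] B →L[ℝ] B}
  {F : V → B} {z : V}

theorem analyticAt_of_diracOp_eq_zero [Nonempty ι] [CompleteSpace B]
    (hσ : ∀ x a, σ' x (σ x a) = (∑ i, b.repr x i ^ 2) • a) {U : Set V} (hU : U ∈ 𝓝 z)
    (hF : ContDiffOn ℝ 1 F U) (hF0 : ∀ᶠ y in 𝓝 z, diracOp b σ F y = 0) : AnalyticAt ℝ F z := by
  let Φ : EuclideanSpace ℝ ι ≃L[ℝ] V := (EuclideanSpace.equiv ι ℝ).trans b.equivFunL.symm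
  let e := EuclideanSpace.basisFun ι ℝ
  have hΦe (i : ι) : Φ (e i) = b i := by
    classical
    rw [← Φ.eq_symm_apply]
    ext j
    simp [Φ, e, Finsupp.single_apply, eq_comm]
  have hΦ_repr (x : EuclideanSpace ℝ ι) (i : ι) : b.repr (Φ x) i = x i :=
    congr_fun (b.equivFunL.apply_symm_apply (EuclideanSpace.equiv ι ℝ x)) i
  have hdirac (y : EuclideanSpace ℝ ι) :
      diracOp e (σ ∘L (Φ : EuclideanSpace ℝ ι →L[ℝ] V)) (F ∘ Φ) y = diracOp b σ F (Φ y) := by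
    simp [diracOp, Φ.comp_right_fderiv, hΦe]
  have hΦz : Tendsto Φ (𝓝 (Φ.symm z)) (𝓝 z) := Φ.continuous.tendsto' _ _ (Φ.apply_symm_apply z)
  have hFΦ : AnalyticAt ℝ (F ∘ Φ) (Φ.symm z) := by
    refine analyticAt_of_diracOp_eq_zero_of_orthonormal e
      (σ := σ ∘L (Φ : EuclideanSpace ℝ ι →L[ℝ] V))
      (σ' := σ' ∘L (Φ : EuclideanSpace ℝ ι →L[ℝ] V)) (fun x a => ?_) (hΦz hU)
      (hF.comp Φ.contDiff.contDiffOn fun _ hx => hx) ?_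
    · simp [hσ, hΦ_repr, EuclideanSpace.norm_sq_eq]
    · simpa only [hdirac] using hΦz.eventually hF0
  simpa [Function.comp_def] using
    hFΦ.comp ((Φ.symm : V →L[ℝ] EuclideanSpace ℝ ι).analyticAt z)

theorem symbol_mul_add_symbol_mul (hσ : ∀ x a, σ' x (σ x a) = (∑ i, b.repr x i ^ 2) • a) (x y : V)
    (a : B) : σ' x (σ y a) + σ' y (σ x a) = (2 * ∑ i, b.repr x i * b.repr y i) • a := by
  have h := hσ (x + y) a
  simp only [map_add, add_apply, Finsupp.add_apply, hσ, add_sq, Finset.sum_add_distrib, add_smul,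
    mul_assoc, ← Finset.mul_sum] at h
  linear_combination (norm := module) h

theorem sum_fderiv_fderiv_eq_zero_of_diracOp
    (hσ : ∀ x a, σ' x (σ x a) = (∑ i, b.repr x i ^ 2) • a) (hF : ContDiffAt ℝ 2 F z)
    (hF0 : ∀ᶠ y in 𝓝 z, diracOp b σ F y = 0) :
    ∑ i, fderiv ℝ (fun y => fderiv ℝ F y (b i)) z (b i) = 0 := by
  have hF' : DifferentiableAt ℝ (fderiv ℝ F) z :=
    (hF.fderiv_right (m := 1) le_rfl).differentiableAt one_ne_zero
  have hpartial (u : V) :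
      HasFDerivAt (fun y => fderiv ℝ F y u) ((fderiv ℝ (fderiv ℝ F) z).flip u) z := by
    simpa using hF'.hasFDerivAt.clm_apply (hasFDerivAt_const u z)
  let T (i j : ι) : B := fderiv ℝ (fderiv ℝ F) z (b i) (b j)
  have hT_symm (i j : ι) : T i j = T j i := (hF.isSymmSndFDerivAt (by simp)) (b i) (b j)
  have hT_dirac (i : ι) : ∑ j, σ (b j) (T i j) = 0 := by
    have hderiv : HasFDerivAt (diracOp b σ F)
        (∑ j, (σ (b j)).comp ((fderiv ℝ (fderiv ℝ F) z).flip (b j))) z :=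
      HasFDerivAt.fun_sum fun j _ => (σ (b j)).hasFDerivAt.comp z (hpartial (b j))
    have hzero := hderiv.unique ((hasFDerivAt_const 0 z).congr_of_eventuallyEq hF0)
    simpa [T] using DFunLike.congr_fun hzero (b i)
  have hsquare : ∑ i, ∑ j, σ' (b i) (σ (b j) (T i j)) = 0 := by
    simp only [← map_sum, hT_dirac, map_zero, Finset.sum_const_zero]
  have hpolar : ∑ i, ∑ j, (σ' (b i) (σ (b j) (T i j)) + σ' (b j) (σ (b i) (T i j))) =
      (2 : ℝ) • ∑ i, T i i := by
    classical
    simp [symbol_mul_add_symbol_mul b hσ, Finsupp.single_apply, Finset.smul_sum]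
  have hswap : ∑ i, ∑ j, σ' (b j) (σ (b i) (T i j)) = 0 := by
    rw [Finset.sum_comm, ← hsquare]
    simp only [hT_symm]
  simp only [Finset.sum_add_distrib, hsquare, hswap, add_zero] at hpolar
  simp only [(hpartial _).fderiv]
  exact (smul_eq_zero_iff_right two_ne_zero).1 hpolar.symm

theorem fderiv_fderiv_clm_comp {C : Type*} [NormedAddCommGroup C] [NormedSpace ℝ C] (T : B →L[ℝ] C)
    (hF : ContDiffAt ℝ 2 F z) (u u' : V) :
    fderiv ℝ (fun y => fderiv ℝ (fun x => T (F x)) y u) z u' =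
      T (fderiv ℝ (fun y => fderiv ℝ F y u) z u') := by
  have hfirst : (fun y => fderiv ℝ (fun x => T (F x)) y u) =ᶠ[𝓝 z] fun y => T (fderiv ℝ F y u) := by
    filter_upwards [hF.eventually (by simp)] with y hy
    rw [fderiv_fun_comp y T.differentiableAt (hy.differentiableAt two_ne_zero)]
    simp
  have hF' : DifferentiableAt ℝ (fun y => fderiv ℝ F y u) z :=
    ((hF.fderiv_right (m := 1) le_rfl).differentiableAt one_ne_zero).clm_apply
      (differentiableAt_const u)
  rw [hfirst.fderiv_eq, fderiv_fun_comp z T.differentiableAt hF']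
  simp

end CliffordSymbol

section DoubledSymbol

variable {W B : Type*} [NormedAddCommGroup W] [NormedSpace ℝ W] [NormedAddCommGroup B]
  [NormedSpace ℝ B] {l l' : W →L[ℝ] B →L[ℝ] B}

/-- The symbol of the generalized Cauchy-Riemann operator
`(F₁, F₂) ↦ (D F₁ - ∂_r F₂, D' F₂ + ∂_r F₁)` on `W × ℝ`, where `l` and `l'` are the symbols of the
operators `D` and `D'` on `W`. -/
noncomputable def doubledSymbol (l l' : W →L[ℝ] B →L[ℝ] B) :
    W × ℝ →L[ℝ] B × B →L[ℝ] B × B :=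
  (ContinuousLinearMap.prodMapL ℝ B B B B ∘L l.prod l') ∘L .fst ℝ W ℝ +
    (ContinuousLinearMap.snd ℝ W ℝ).smulRight
      ((-ContinuousLinearMap.snd ℝ B B).prod (.fst ℝ B B))

theorem doubledSymbol_apply (y : W) (r : ℝ) (a b : B) :
    doubledSymbol l l' (y, r) (a, b) = (l y a - r • b, l' y b + r • a) := by
  simp [doubledSymbol, sub_eq_add_neg]

theorem doubledSymbol_neg_doubledSymbol {q : W → ℝ} (hl : ∀ y a, l' y (l y a) = q y • a)
    (hl' : ∀ y a, l y (l' y a) = q y • a) (y : W) (r : ℝ) (c : B × B) :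
    doubledSymbol l' l (y, -r) (doubledSymbol l l' (y, r) c) = (q y + r ^ 2) • c := by
  obtain ⟨a, b⟩ := c
  simp only [doubledSymbol_apply, map_sub, map_add, map_smul, hl, hl', Prod.smul_mk, Prod.mk.injEq]
  constructor <;> module

end DoubledSymbol

section HypercomplexBasis

variable {conj : A → A} {v : ℕ → A} {m n : ℕ}

/-- Left multiplication in `A`, as a continuous bilinear map. -/
noncomputable def IsAltStarAlg.lmul (H : IsAltStarAlg A conj) : A →L[ℝ] A →L[ℝ] A :=
  haveI := H.finDim
  (LinearMap.mk₂ ℝ (· * ·) H.add_mul' H.smul_mul' H.mul_add' H.mul_smul').toContinuousBilinearMap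

theorem IsAltStarAlg.lmul_apply (H : IsAltStarAlg A conj) (a b : A) : H.lmul a b = a * b :=
  rfl

theorem IsAltStarAlg.sum_smul_mul_sum_smul_self {ι : Type*} [Fintype ι] (H : IsAltStarAlg A conj)
    {u : ι → A} (hu : ∀ i, u i * u i = -1) (huu : Pairwise fun i j => u i * u j = -(u j * u i))
    (w : ι → ℝ) : (∑ i, w i • u i) * (∑ i, w i • u i) = -(∑ i, w i ^ 2) • (1 : A) := by
  classical
  have hpolar (i j : ι) : u i * u j + u j * u i = if i = j then (-2 : ℝ) • (1 : A) else 0 := by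
    split_ifs with hij
    · subst hij
      rw [hu]
      module
    · rw [huu hij, neg_add_cancel]
  have hexpand : (∑ i, w i • u i) * (∑ i, w i • u i) = ∑ i, ∑ j, (w i * w j) • (u j * u i) := by
    simp only [← H.lmul_apply, map_sum, map_smul, sum_apply, smul_apply,
      Finset.smul_sum, smul_smul]
  have hswap : ∑ i, ∑ j, (w i * w j) • (u i * u j) = ∑ i, ∑ j, (w i * w j) • (u j * u i) := by
    rw [Finset.sum_comm]
    simp only [mul_comm]
  refine smul_right_injective A (two_ne_zero (α := ℝ)) ?_
  calc (2 : ℝ) • ((∑ i, w i • u i) * ∑ i, w i • u i)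
      = ∑ i, ∑ j, (w i * w j) • (u i * u j + u j * u i) := by
        simp only [smul_add, Finset.sum_add_distrib, hswap, hexpand, two_smul]
    _ = (2 : ℝ) • (-(∑ i, w i ^ 2) • (1 : A)) := by
        simp only [hpolar, smul_ite, smul_zero, Finset.sum_ite_eq, Finset.mem_univ, if_true,
          Finset.sum_smul, ← Finset.sum_neg_distrib, Finset.smul_sum]
        exact Finset.sum_congr rfl fun i _ => by module

theorem IsHypBasis.mul_self_eq_neg_one (H : IsAltStarAlg A conj) (hv : IsHypBasis A conj v m)
    {s : ℕ} (hs : 1 ≤ s) (hsm : s ≤ m) : v s * v s = -1 := by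
  have h := hv.norm_one s hs hsm
  rw [eq_neg_of_add_eq_zero_right (hv.trace_zero s hs hsm), ← H.lmul_apply, map_neg] at h
  exact neg_eq_iff_eq_neg.1 h

theorem IsHypBasis.emb_mul_emb_self (H : IsAltStarAlg A conj) (hv : IsHypBasis A conj v m)
    (hnm : n ≤ m) (w : Fin (n + 1) → ℝ) :
    emb v n w * emb v n w = (2 * w 0) • emb v n w - (∑ s, w s ^ 2) • (1 : A) := by
  let u := ∑ s : Fin n, w s.succ • v (s + 1)
  have hemb : emb v n w = w 0 • 1 + u := by simp [emb, u, Fin.sum_univ_succ, hv.v_zero]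
  have hu : u * u = -(∑ s : Fin n, w s.succ ^ 2) • (1 : A) :=
    H.sum_smul_mul_sum_smul_self
      (fun s => hv.mul_self_eq_neg_one H (by lia) (by lia))
      (fun s t hst => hv.anticomm _ _ (by lia) (by lia) (by lia) (by lia) (by lia)) _
  rw [hemb, H.mul_add', H.add_mul', H.add_mul', hu, Fin.sum_univ_succ]
  simp only [H.smul_mul', H.mul_smul', H.one_mul', H.mul_one']
  module

/-- The symbol `x ↦ (a ↦ x a)` of `D_{x_p}`, for `x ∈ span (v 0, …, v n)`. -/
noncomputable def IsAltStarAlg.embMul (H : IsAltStarAlg A conj) (v : ℕ → A) (n : ℕ) :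
    (Fin (n + 1) → ℝ) →L[ℝ] A →L[ℝ] A :=
  H.lmul ∘L (Fintype.linearCombination ℝ fun s : Fin (n + 1) => v s).toContinuousLinearMap

/-- The symbol `x ↦ (a ↦ x^c a)` of `D̄_{x_p}`, for `x ∈ span (v 0, …, v n)`; it is encoded through
`x^c = 2 x₀ - x`. -/
noncomputable def IsAltStarAlg.conjEmbMul (H : IsAltStarAlg A conj) (v : ℕ → A) (n : ℕ) :
    (Fin (n + 1) → ℝ) →L[ℝ] A →L[ℝ] A :=
  (2 • ContinuousLinearMap.proj 0).smulRight (.id ℝ A) - H.embMul v n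

theorem IsAltStarAlg.embMul_apply (H : IsAltStarAlg A conj) (w : Fin (n + 1) → ℝ) (a : A) :
    H.embMul v n w a = emb v n w * a :=
  rfl

theorem IsAltStarAlg.conjEmbMul_apply (H : IsAltStarAlg A conj) (w : Fin (n + 1) → ℝ) (a : A) :
    H.conjEmbMul v n w a = (2 * w 0) • a - emb v n w * a := by
  simp [conjEmbMul, embMul_apply]

theorem IsHypBasis.conjEmbMul_embMul (H : IsAltStarAlg A conj) (hv : IsHypBasis A conj v m)
    (hnm : n ≤ m) (w : Fin (n + 1) → ℝ) (a : A) :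
    H.conjEmbMul v n w (H.embMul v n w a) = (∑ s, w s ^ 2) • a := by
  rw [H.conjEmbMul_apply, H.embMul_apply, H.alt_left, hv.emb_mul_emb_self H hnm, ← H.lmul_apply,
    ← H.lmul_apply, map_sub, map_smul, map_smul, sub_apply, smul_apply, smul_apply, sub_sub_cancel,
    H.lmul_apply, H.one_mul']

theorem IsHypBasis.embMul_conjEmbMul (H : IsAltStarAlg A conj) (hv : IsHypBasis A conj v m)
    (hnm : n ≤ m) (w : Fin (n + 1) → ℝ) (a : A) :
    H.embMul v n w (H.conjEmbMul v n w a) = (∑ s, w s ^ 2) • a := by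
  rw [← hv.conjEmbMul_embMul H hnm]
  simp only [H.conjEmbMul_apply, map_sub, map_smul, H.embMul_apply, ← H.lmul_apply]

end HypercomplexBasis

section StemFunction

variable {conj : A → A} {v : ℕ → A} {m p : ℕ} {D : Set ((Fin (p + 1) → ℝ) × ℝ)}
  {F₁ F₂ : (Fin (p + 1) → ℝ) × ℝ → A}

/-- The standard basis of `ℝ^{p+1} × ℝ`. -/
noncomputable def stemBasis (p : ℕ) : Module.Basis (Fin (p + 1) ⊕ Unit) ℝ ((Fin (p + 1) → ℝ) × ℝ) :=
  (Pi.basisFun ℝ (Fin (p + 1))).prod (.singleton Unit ℝ)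

theorem stemBasis_inl (s : Fin (p + 1)) : stemBasis p (.inl s) = (Pi.single s 1, 0) := by
  simp [stemBasis]

theorem stemBasis_inr (i : Unit) : stemBasis p (.inr i) = (0, 1) := by
  simp [stemBasis]

theorem sum_stemBasis_repr_sq (z : (Fin (p + 1) → ℝ) × ℝ) :
    ∑ i, (stemBasis p).repr z i ^ 2 = ∑ s, z.1 s ^ 2 + z.2 ^ 2 := by
  simp [stemBasis]

/-- The symbol `(a, b) ↦ (x_p a - r b, x_p^c b + r a)` of the system `StemCR`. -/
noncomputable def IsAltStarAlg.stemSymbol (H : IsAltStarAlg A conj) (v : ℕ → A) (p : ℕ) :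
    (Fin (p + 1) → ℝ) × ℝ →L[ℝ] A × A →L[ℝ] A × A :=
  doubledSymbol (H.embMul v p) (H.conjEmbMul v p)

/-- The symbol `(a, b) ↦ (x_p^c a + r b, x_p b - r a)`, which inverts `stemSymbol` up to the factor
`|x_p|² + r²`. -/
noncomputable def IsAltStarAlg.conjStemSymbol (H : IsAltStarAlg A conj) (v : ℕ → A) (p : ℕ) :
    (Fin (p + 1) → ℝ) × ℝ →L[ℝ] A × A →L[ℝ] A × A :=
  doubledSymbol (H.conjEmbMul v p) (H.embMul v p) ∘L
    (ContinuousLinearMap.fst ℝ _ ℝ).prod (-.snd ℝ _ ℝ)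

theorem IsHypBasis.conjStemSymbol_stemSymbol (H : IsAltStarAlg A conj)
    (hv : IsHypBasis A conj v m) (hpm : p ≤ m) (z : (Fin (p + 1) → ℝ) × ℝ) (c : A × A) :
    H.conjStemSymbol v p z (H.stemSymbol v p z c) = (∑ i, (stemBasis p).repr z i ^ 2) • c := by
  rw [sum_stemBasis_repr_sq]
  exact doubledSymbol_neg_doubledSymbol (hv.conjEmbMul_embMul H hpm) (hv.embMul_conjEmbMul H hpm)
    z.1 z.2 c

theorem IsHypBasis.diracOp_stemSymbol (H : IsAltStarAlg A conj) (hv : IsHypBasis A conj v m)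
    {z : (Fin (p + 1) → ℝ) × ℝ} (hF₁ : DifferentiableAt ℝ F₁ z) (hF₂ : DifferentiableAt ℝ F₂ z) :
    diracOp (stemBasis p) (H.stemSymbol v p) (fun y => (F₁ y, F₂ y)) z =
      (DopSx v p F₁ z - pdSr p F₂ z, DbaropSx v p F₂ z + pdSr p F₁ z) := by
  have hemb (s : Fin (p + 1)) : emb v p (Pi.single s 1) = v s := by
    simp [emb, Pi.single_apply]
  have h0 : H.lmul (v 0) = .id ℝ A := by
    ext a
    rw [H.lmul_apply, hv.v_zero, H.one_mul', ContinuousLinearMap.id_apply]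
  simp only [diracOp, hF₁.fderiv_prodMk hF₂, Fintype.sum_sum_type, stemBasis_inl, stemBasis_inr,
    IsAltStarAlg.stemSymbol, ContinuousLinearMap.prod_apply, doubledSymbol_apply]
  refine Prod.ext ?_ ?_
  · simp [DopSx, pdSx, pdSr, H.embMul_apply, hemb, Prod.fst_sum, sub_eq_add_neg]
  · simp [DbaropSx, pdSx, pdSr, H.conjEmbMul_apply, hemb, Prod.snd_sum, Fin.sum_univ_succ,
      ← H.lmul_apply, h0]
    module

theorem IsHypBasis.diracOp_stemSymbol_eq_zero (H : IsAltStarAlg A conj)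
    (hv : IsHypBasis A conj v m) (hD : IsOpen D) (hF₁ : ContDiffOn ℝ 1 F₁ D)
    (hF₂ : ContDiffOn ℝ 1 F₂ D) (hCR : StemCR v p D F₁ F₂) {z : (Fin (p + 1) → ℝ) × ℝ}
    (hz : z ∈ D) : diracOp (stemBasis p) (H.stemSymbol v p) (fun y => (F₁ y, F₂ y)) z = 0 := by
  have hD_nhds := hD.mem_nhds hz
  rw [hv.diracOp_stemSymbol H ((hF₁.contDiffAt hD_nhds).differentiableAt one_ne_zero)
    ((hF₂.contDiffAt hD_nhds).differentiableAt one_ne_zero), (hCR z hz).1, (hCR z hz).2]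
  rfl

theorem analyticOnNhd_stem (H : IsAltStarAlg A conj) (hv : IsHypBasis A conj v m) (hpm : p ≤ m)
    (hD : IsOpen D) (hF₁ : ContDiffOn ℝ 1 F₁ D) (hF₂ : ContDiffOn ℝ 1 F₂ D)
    (hCR : StemCR v p D F₁ F₂) : AnalyticOnNhd ℝ (fun z => (F₁ z, F₂ z)) D := by
  have := H.finDim
  have := FiniteDimensional.complete ℝ A
  exact fun z hz => analyticAt_of_diracOp_eq_zero (stemBasis p)
    (hv.conjStemSymbol_stemSymbol H hpm) (hD.mem_nhds hz) (hF₁.prodMk hF₂)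
    (eventually_of_mem (hD.mem_nhds hz) fun _ hy =>
      hv.diracOp_stemSymbol_eq_zero H hD hF₁ hF₂ hCR hy)

theorem lapSx_eq_sum_stemBasis {E : Type*} [NormedAddCommGroup E] [NormedSpace ℝ E]
    (G : (Fin (p + 1) → ℝ) × ℝ → E) (z : (Fin (p + 1) → ℝ) × ℝ) :
    lapSx p G z = ∑ i, fderiv ℝ (fun y => fderiv ℝ G y (stemBasis p i)) z (stemBasis p i) := by
  simp only [Fintype.sum_sum_type, stemBasis_inl, stemBasis_inr, Fintype.sum_unique]
  rfl

theorem lapSx_stem_eq_zero (H : IsAltStarAlg A conj) (hv : IsHypBasis A conj v m) (hpm : p ≤ m)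
    (hD : IsOpen D) (hF₁ : ContDiffOn ℝ 1 F₁ D) (hF₂ : ContDiffOn ℝ 1 F₂ D)
    (hCR : StemCR v p D F₁ F₂) {z : (Fin (p + 1) → ℝ) × ℝ} (hz : z ∈ D) :
    lapSx p F₁ z = 0 ∧ lapSx p F₂ z = 0 := by
  have := H.finDim
  have := FiniteDimensional.complete ℝ A
  have hF := ((analyticOnNhd_stem H hv hpm hD hF₁ hF₂ hCR) z hz).contDiffAt (n := 2)
  have hpair := sum_fderiv_fderiv_eq_zero_of_diracOp (stemBasis p)
    (hv.conjStemSymbol_stemSymbol H hpm) hF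
    (eventually_of_mem (hD.mem_nhds hz) fun _ hy =>
      hv.diracOp_stemSymbol_eq_zero H hD hF₁ hF₂ hCR hy)
  have hcomponent (T : A × A →L[ℝ] A) : lapSx p (fun y => T (F₁ y, F₂ y)) z = 0 := by
    simp only [lapSx_eq_sum_stemBasis, fderiv_fderiv_clm_comp T hF, ← map_sum, hpair, map_zero]
  exact ⟨hcomponent (.fst ℝ A A), hcomponent (.snd ℝ A A)⟩

end StemFunction

section InducedFunction

variable {conj : A → A} {v : ℕ → A} {m p : ℕ} {D : Set ((Fin (p + 1) → ℝ) × ℝ)}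
  {F₁ F₂ : (Fin (p + 1) → ℝ) × ℝ → A} {f : (Fin (m + 1) → ℝ) → A}

theorem contDiff_projP {n : WithTop ℕ∞} : ContDiff ℝ n (projP m p) := by
  refine contDiff_pi.2 fun s => ?_
  unfold projP
  split_ifs <;> fun_prop

theorem contDiff_xqpart {n : WithTop ℕ∞} : ContDiff ℝ n (xqpart m p) := by
  refine contDiff_pi.2 fun s => ?_
  unfold xqpart
  split_ifs <;> fun_prop

theorem rad_sq (x : Fin (m + 1) → ℝ) : rad m p x ^ 2 = ∑ s, xqpart m p x s ^ 2 :=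
  Real.sq_sqrt (Finset.sum_nonneg fun _ _ => sq_nonneg _)

theorem continuous_rad : Continuous (rad m p) := by
  have := (contDiff_xqpart (m := m) (p := p) (n := 0)).continuous
  unfold rad
  fun_prop

theorem injP_projP_add_xqpart (x : Fin (m + 1) → ℝ) :
    injP m p (projP m p x) + xqpart m p x = x := by
  ext s
  obtain hs | hs := le_or_gt (s : ℕ) p
  · simp [injP, projP, xqpart, hs, s.is_le.not_gt]
  · simp [injP, xqpart, hs.not_ge]

theorem projP_pt (hp : p ≤ m) {w : Fin (m + 1) → ℝ} (hw : ∀ s : Fin (m + 1), (s : ℕ) ≤ p → w s = 0)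
    (y : Fin (p + 1) → ℝ) (r : ℝ) : projP m p (pt m p w y r) = y := by
  ext s
  have hs : (s : ℕ) < m + 1 := by lia
  simp only [projP, pt, injP, Pi.add_apply, Pi.smul_apply, dif_pos hs, dif_pos s.isLt,
    hw ⟨s, hs⟩ (Nat.lt_succ_iff.1 s.isLt), smul_zero, add_zero]

theorem xqpart_pt {w : Fin (m + 1) → ℝ} (hw : ∀ s : Fin (m + 1), (s : ℕ) ≤ p → w s = 0)
    (y : Fin (p + 1) → ℝ) (r : ℝ) : xqpart m p (pt m p w y r) = r • w := by
  ext s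
  by_cases hs : (s : ℕ) ≤ p
  · simp [xqpart, hs, hw s hs]
  · simp [xqpart, pt, injP, hs]

theorem IsHypBasis.mem_Sph_iff (H : IsAltStarAlg A conj) (hv : IsHypBasis A conj v m)
    {w : Fin (m + 1) → ℝ} :
    w ∈ Sph v m p ↔ (∀ s : Fin (m + 1), (s : ℕ) ≤ p → w s = 0) ∧ ∑ s, w s ^ 2 = 1 := by
  have hone : (1 : A) ≠ 0 := by simpa [hv.v_zero] using hv.indep.ne_zero 0
  refine and_congr_right fun hw => ?_
  rw [hv.emb_mul_emb_self H le_rfl, hw 0 (Nat.zero_le p), mul_zero, zero_smul, zero_sub, neg_inj]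
  exact ⟨fun h => smul_left_injective ℝ hone (h.trans (one_smul ℝ 1).symm),
    fun h => by rw [h, one_smul]⟩

theorem IsHypBasis.rad_pt (H : IsAltStarAlg A conj) (hv : IsHypBasis A conj v m)
    {w : Fin (m + 1) → ℝ} (hw : w ∈ Sph v m p) (y : Fin (p + 1) → ℝ) (r : ℝ) :
    rad m p (pt m p w y r) = |r| := by
  obtain ⟨hw0, hw1⟩ := (hv.mem_Sph_iff H).1 hw
  simp [rad, xqpart_pt hw0, mul_pow, ← Finset.mul_sum, hw1, Real.sqrt_sq_eq_abs]

theorem IsHypBasis.exists_mem_Sph_xqpart_eq (H : IsAltStarAlg A conj)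
    (hv : IsHypBasis A conj v m) (hp : p < m) (x : Fin (m + 1) → ℝ) :
    ∃ w ∈ Sph v m p, xqpart m p x = rad m p x • w := by
  obtain hr | hr := eq_or_ne (rad m p x) 0
  · refine ⟨Pi.single (Fin.last m) 1, (hv.mem_Sph_iff H).2 ⟨fun s hs => ?_, ?_⟩, ?_⟩
    · exact Pi.single_eq_of_ne (by rintro rfl; exact hs.not_gt hp) _
    · simp [Pi.single_apply]
    · have hzero := (rad_sq (p := p) x).symm
      rw [hr, zero_pow two_ne_zero,
        Finset.sum_eq_zero_iff_of_nonneg fun _ _ => sq_nonneg _] at hzero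
      ext s
      simpa [hr] using hzero s
  · refine ⟨normq m p x, (hv.mem_Sph_iff H).2 ⟨fun s hs => ?_, ?_⟩, (smul_inv_smul₀ hr _).symm⟩
    · simp [normq, xqpart, hs]
    · simp [normq, mul_pow, ← Finset.mul_sum, ← rad_sq, hr]

theorem IsHypBasis.projP_rad_mem_of_mem_OmegaD (H : IsAltStarAlg A conj)
    (hv : IsHypBasis A conj v m) (hp : p ≤ m) (hDrefl : ∀ z ∈ D, reflD p z ∈ D)
    {x : Fin (m + 1) → ℝ} (hx : x ∈ OmegaD v m p D) : (projP m p x, rad m p x) ∈ D := by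
  obtain ⟨w, hw, z, hz, rfl⟩ := hx
  rw [projP_pt hp hw.1, hv.rad_pt H hw]
  obtain hr | hr := abs_choice z.2 <;> rw [hr]
  exacts [hz, hDrefl z hz]

theorem Induced.apply_eq (H : IsAltStarAlg A conj) (hv : IsHypBasis A conj v m) (hp : p < m)
    (hind : Induced v m p D F₁ F₂ f) {x : Fin (m + 1) → ℝ} (hx : (projP m p x, rad m p x) ∈ D)
    {a : A} (ha : F₂ (projP m p x, rad m p x) = rad m p x • a) :
    f x = F₁ (projP m p x, rad m p x) + emb v m (xqpart m p x) * a := by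
  obtain ⟨w, hw, hxw⟩ := hv.exists_mem_Sph_xqpart_eq H hp x
  have hpt : pt m p w (projP m p x) (rad m p x) = x := by
    rw [pt, ← hxw, injP_projP_add_xqpart]
  have hf := hind w hw _ hx
  rw [hpt, ha] at hf
  rw [hf, hxw, ← H.embMul_apply, ← H.embMul_apply, map_smul, map_smul, smul_apply]

theorem Induced.analyticOnNhd (H : IsAltStarAlg A conj) (hv : IsHypBasis A conj v m) (hp : p < m)
    (hD : IsOpen D) (hDrefl : ∀ z ∈ D, reflD p z ∈ D) (hstem : IsStem p D F₁ F₂)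
    (hF₁ : AnalyticOnNhd ℝ F₁ D) (hF₂ : AnalyticOnNhd ℝ F₂ D) (hind : Induced v m p D F₁ F₂ f) :
    AnalyticOnNhd ℝ f (OmegaD v m p D) := by
  intro x hx
  have := H.finDim
  have := FiniteDimensional.complete ℝ A
  have hz := hv.projP_rad_mem_of_mem_OmegaD H hp.le hDrefl hx
  have hD_nhds := hD.mem_nhds hz
  obtain ⟨g₁, hg₁, hFg₁⟩ := exists_analyticAt_sq_of_even (hF₁ _ hz) (Real.sqrt_nonneg _)
    (eventually_of_mem hD_nhds fun z hz => (hstem z hz).1)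
  obtain ⟨g₂, hg₂, hFg₂⟩ := exists_analyticAt_sq_of_odd (hF₂ _ hz) (Real.sqrt_nonneg _)
    (eventually_of_mem hD_nhds fun z hz => (hstem z hz).2)
  let ψ (y : Fin (m + 1) → ℝ) : (Fin (p + 1) → ℝ) × ℝ := (projP m p y, rad m p y ^ 2)
  have hψ : AnalyticAt ℝ ψ x := by
    have hq := contDiff_xqpart (m := m) (p := p) (n := ω)
    simp only [ψ, rad_sq]
    exact (contDiff_projP.prodMk (by fun_prop)).contDiffAt.analyticAt
  have hlmul : AnalyticAt ℝ (fun y => H.embMul v m (xqpart m p y)) x :=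
    ((H.embMul v m).contDiff.comp contDiff_xqpart).contDiffAt.analyticAt
  have hg₁ψ : AnalyticAt ℝ (fun y => g₁ (ψ y)) x := hg₁.comp_of_eq hψ rfl
  have hg₂ψ : AnalyticAt ℝ (fun y => g₂ (ψ y)) x := hg₂.comp_of_eq hψ rfl
  have hmul := ((ContinuousLinearMap.id ℝ (A →L[ℝ] A)).analyticAt_bilinear _).comp₂ hlmul hg₂ψ
  refine (hg₁ψ.add hmul).congr ?_
  have hcont : Tendsto (fun y => (projP m p y, rad m p y)) (𝓝 x) (𝓝 (projP m p x, rad m p x)) :=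
    ((contDiff_projP (n := 0)).continuous.prodMk continuous_rad).tendsto x
  filter_upwards [hcont hD_nhds, hcont.eventually hFg₁, hcont.eventually hFg₂] with y hy h₁ h₂
  rw [hind.apply_eq H hv hp hy h₂, h₁]
  rfl

end InducedFunction

/-- For `f = F₁ + ωF₂ ∈ GSR(Ω_D)`: the components `F₁, F₂` are real analytic on `D`,
`f` is real analytic on `Ω_D`, and `Δ_{x'}F₁ = 0`, `Δ_{x'}F₂ = 0` on `D`. -/
theorem gsr_harmonic_components
    {A : Type*} [NormedAddCommGroup A] [NormedSpace ℝ A] [Mul A] [One A]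
    (conj : A → A) (H : IsAltStarAlg A conj)
    (v : ℕ → A) (m p : ℕ) (hv : IsHypBasis A conj v m) (hp : p < m)
    (D : Set ((Fin (p + 1) → ℝ) × ℝ)) (hD : IsOpen D)
    (hDrefl : ∀ z ∈ D, reflD p z ∈ D)
    (F₁ F₂ : (Fin (p + 1) → ℝ) × ℝ → A) (hstem : IsStem p D F₁ F₂)
    (hF₁ : ContDiffOn ℝ 1 F₁ D) (hF₂ : ContDiffOn ℝ 1 F₂ D)
    (f : (Fin (m + 1) → ℝ) → A) (hind : Induced v m p D F₁ F₂ f)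
    (hCR : StemCR v p D F₁ F₂) :
    AnalyticOnNhd ℝ F₁ D ∧ AnalyticOnNhd ℝ F₂ D ∧
    AnalyticOnNhd ℝ f (OmegaD v m p D) ∧
    (∀ z ∈ D, lapSx p F₁ z = 0 ∧ lapSx p F₂ z = 0) := by
  have hpair := analyticOnNhd_stem H hv hp.le hD hF₁ hF₂ hCR
  have hF₁_an : AnalyticOnNhd ℝ F₁ D :=
    (ContinuousLinearMap.fst ℝ A A).comp_analyticOnNhd hpair
  have hF₂_an : AnalyticOnNhd ℝ F₂ D :=
    (ContinuousLinearMap.snd ℝ A A).comp_analyticOnNhd hpair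
  exact ⟨hF₁_an, hF₂_an, hind.analyticOnNhd H hv hp hD hDrefl hstem hF₁_an hF₂_an,
    fun z hz => lapSx_stem_eq_zero H hv hp.le hD hF₁ hF₂ hCR hz⟩

end GPSM
end

section
/- Let f(x) = F₁(x') + ωF₂(x') ∈ GSR(Ω_D) and for k ∈ ℕ set A_k(x') = ((1/r)∂_r)^k F₁(x') and B_k(x') = (∂_r ∘ (1/r)·)^k F₂(x') (with values at r = 0 understood as limits as r → 0, which exist). Then for all k ∈ ℕ and all x ∈ Ω_D: D_{x_p} A_k(x') − ∂_r B_k(x') = (2k/r) B_k(x') and D̄_{x_p} B_k(x') + ∂_r A_k(x') = 0. -/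
open scoped BigOperators
open Filter Topology

namespace GPSM

variable (A : Type*) [NormedAddCommGroup A] [NormedSpace ℝ A] [Mul A] [One A]

variable {A}

/-!
The Clifford relations between the `v_s` and their conjugates make the Cauchy-Riemann system for
`(F₁, F₂)` a factor of the Laplacian of `ℝ^{p+2}`.  A `C¹` solution is therefore weakly harmonic,
hence smooth by Weyl's lemma: its weighted means around a point, for a suitable radial weight, do
not depend on the scale.  Off `r = 0` the equations for `(A_{k+1}, B_{k+1})` come from those for
`(A_k, B_k)` by writing `B_k = r b₁` and commuting `∂_r` with the operators in `x_p`; each step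
raises the coefficient `c` of the singular term `(c / r) B_k` by `2`.  On `r = 0` both terms of the
second equation vanish, because `A_k` is even and `B_k` is odd in `r`.
-/

open MeasureTheory Set
open scoped ContDiff

section FirstOrderOperators

variable {E F G ι : Type*} [NormedAddCommGroup E] [NormedSpace ℝ E] [NormedAddCommGroup F]
  [NormedSpace ℝ F] [NormedAddCommGroup G] [NormedSpace ℝ G] [Fintype ι]
  {K : ι → F →L[ℝ] G} {e : ι → E} {u w : E → F} {W : Set E} {z : E}

/-- The first-order differential operator `∑ i, K i ∂_{e i}` on maps `E → F`, with constant
operator coefficients `K i` and directions `e i`. -/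
noncomputable def firstOrderOp (K : ι → F →L[ℝ] G) (e : ι → E) (u : E → F) (z : E) : G :=
  ∑ i, K i (fderiv ℝ u z (e i))

theorem fderiv_apply_eq_zero_of_notMem (huW : tsupport u ⊆ W) (hz : z ∉ W) (a : E) :
    fderiv ℝ u z a = 0 := by
  have hz0 : fderiv ℝ u z = 0 :=
    Function.notMem_support.1 fun hsupp => hz (huW (support_fderiv_subset ℝ hsupp))
  rw [hz0, zero_apply]

theorem contDiffOn_fderiv_apply (hW : IsOpen W) (hu : ContDiffOn ℝ ∞ u W) (a : E) :
    ContDiffOn ℝ ∞ (fun y => fderiv ℝ u y a) W :=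
  (hu.fderiv_of_isOpen hW (by simp)).clm_apply contDiffOn_const

theorem fderiv_fderiv_apply_comm (hu : ContDiffAt ℝ 2 u z) (a b : E) :
    fderiv ℝ (fun y => fderiv ℝ u y a) z b = fderiv ℝ (fun y => fderiv ℝ u y b) z a := by
  have hd : DifferentiableAt ℝ (fderiv ℝ u) z :=
    (hu.fderiv_right (m := 1) (by norm_num)).differentiableAt one_ne_zero
  have hsymm : IsSymmSndFDerivAt ℝ u z := hu.isSymmSndFDerivAt (by simp)
  simpa [fderiv_clm_apply hd (differentiableAt_const _)] using hsymm b a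

theorem firstOrderOp_congr (h : u =ᶠ[𝓝 z] w) : firstOrderOp K e u z = firstOrderOp K e w z := by
  simp only [firstOrderOp, h.fderiv_eq]

theorem firstOrderOp_fderiv_apply (hu : ContDiffAt ℝ 2 u z) (a : E) :
    firstOrderOp K e (fun y => fderiv ℝ u y a) z = fderiv ℝ (firstOrderOp K e u) z a := by
  have hd : ∀ b, DifferentiableAt ℝ (fun y => fderiv ℝ u y b) z := fun b =>
    ((hu.fderiv_right (m := 1) (by norm_num)).clm_apply contDiffAt_const).differentiableAt
      one_ne_zero
  have hop : HasFDerivAt (firstOrderOp K e u)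
      (∑ i, (K i).comp (fderiv ℝ (fun y => fderiv ℝ u y (e i)) z)) z :=
    .fun_sum fun i _ => (K i).hasFDerivAt.comp z (hd (e i)).hasFDerivAt
  simp [hop.fderiv, firstOrderOp, fderiv_fderiv_apply_comm hu a]

theorem firstOrderOp_smul_of_fderiv_eq_zero {g : E → ℝ} (hg : DifferentiableAt ℝ g z)
    (hg0 : ∀ i, fderiv ℝ g z (e i) = 0) (hu : DifferentiableAt ℝ u z) :
    firstOrderOp K e (fun y => g y • u y) z = g z • firstOrderOp K e u z := by
  simp [firstOrderOp, fderiv_fun_smul hg hu, hg0, Finset.smul_sum]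

end FirstOrderOperators

section CauchyRiemannRecursion

variable {F : Type*} [NormedAddCommGroup F] [NormedSpace ℝ F] {p : ℕ}
  {W : Set ((Fin (p + 1) → ℝ) × ℝ)} {u w : (Fin (p + 1) → ℝ) × ℝ → F}
  {z : (Fin (p + 1) → ℝ) × ℝ}

/-- The direction of the coordinate `x_s` in `ℝ^{p+2}` with coordinates `(x_p, r)`. -/
def xDir (p : ℕ) (s : Fin (p + 1)) : (Fin (p + 1) → ℝ) × ℝ := (Pi.single s 1, 0)

theorem pdSr_congr (h : u =ᶠ[𝓝 z] w) : pdSr p u z = pdSr p w z := by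
  simp only [pdSr, h.fderiv_eq]

theorem contDiffOn_pdSr (hW : IsOpen W) (hu : ContDiffOn ℝ ∞ u W) : ContDiffOn ℝ ∞ (pdSr p u) W :=
  contDiffOn_fderiv_apply hW hu _

theorem pdSr_add (hu : DifferentiableAt ℝ u z) (hw : DifferentiableAt ℝ w z) :
    pdSr p (fun y => u y + w y) z = pdSr p u z + pdSr p w z := by
  simp [pdSr, fderiv_fun_add hu hw]

theorem pdSr_const_smul (c : ℝ) (hu : DifferentiableAt ℝ u z) :
    pdSr p (fun y => c • u y) z = c • pdSr p u z := by
  simp [pdSr, fderiv_fun_const_smul hu]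

theorem pdSr_snd_smul (hu : DifferentiableAt ℝ u z) :
    pdSr p (fun y => y.2 • u y) z = z.2 • pdSr p u z + u z := by
  simp [pdSr, fderiv_fun_smul differentiableAt_snd hu, fderiv_snd]

theorem firstOrderOp_pdSr {ι : Type*} [Fintype ι] (K : ι → F →L[ℝ] F)
    (e : ι → (Fin (p + 1) → ℝ) × ℝ) (hu : ContDiffAt ℝ 2 u z) :
    firstOrderOp K e (pdSr p u) z = pdSr p (firstOrderOp K e u) z :=
  firstOrderOp_fderiv_apply hu _

theorem contDiffOn_inv_snd_smul (h0 : ∀ z ∈ W, z.2 ≠ 0) (hu : ContDiffOn ℝ ∞ u W) :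
    ContDiffOn ℝ ∞ (fun y => y.2⁻¹ • u y) W :=
  (contDiffOn_snd.inv h0).smul hu

theorem firstOrderOp_xDir_inv_snd_smul (K : Fin (p + 1) → F →L[ℝ] F) (h0 : z.2 ≠ 0)
    (hu : DifferentiableAt ℝ u z) :
    firstOrderOp K (xDir p) (fun y => y.2⁻¹ • u y) z =
      z.2⁻¹ • firstOrderOp K (xDir p) u z := by
  have hsnd : HasFDerivAt (fun y : (Fin (p + 1) → ℝ) × ℝ => y.2⁻¹)
      (-(z.2 ^ 2)⁻¹ • .snd ℝ (Fin (p + 1) → ℝ) ℝ) z :=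
    (hasDerivAt_inv h0).comp_hasFDerivAt z hasFDerivAt_snd
  exact firstOrderOp_smul_of_fderiv_eq_zero hsnd.differentiableAt
    (fun s => by simp [hsnd.fderiv, xDir]) hu

theorem T1_eqOn (h0 : ∀ z ∈ W, z.2 ≠ 0) : EqOn (T1 p u) (fun z => z.2⁻¹ • pdSr p u z) W :=
  fun z hz => by simp [T1, h0 z hz]

theorem T2_eqOn (hW : IsOpen W) (h0 : ∀ z ∈ W, z.2 ≠ 0) (hu : DifferentiableOn ℝ u W) :
    EqOn (T2 p u) (pdSr p fun z => z.2⁻¹ • u z) W := by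
  intro z hz
  have hd : DifferentiableAt ℝ (fun y : (Fin (p + 1) → ℝ) × ℝ => y.2⁻¹ • u y) z :=
    (differentiableAt_snd.inv (h0 z hz)).smul (hu.differentiableAt (hW.mem_nhds hz))
  have hslice : fderiv ℝ (fun t : ℝ => t⁻¹ • u (z.1, t)) z.2 = _ :=
    (hd.hasFDerivAt.comp z.2 (f := Prod.mk z.1) (hasFDerivAt_prodMk_right z.1 z.2)).fderiv
  simp [T2, h0 z hz, hslice, pdSr]

/-- Smooth solutions `(a, b)` on `W` of the system `D a - ∂_r b = (c / r) b`, `D̄ b + ∂_r a = 0`,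
where `D = ∑ s, K s ∂_{x_s}` and `D̄ = ∑ s, Kb s ∂_{x_s}`. -/
structure IsSystemSolutionOn (K Kb : Fin (p + 1) → F →L[ℝ] F) (c : ℝ)
    (W : Set ((Fin (p + 1) → ℝ) × ℝ)) (a b : (Fin (p + 1) → ℝ) × ℝ → F) : Prop where
  contDiffOn_fst : ContDiffOn ℝ ∞ a W
  contDiffOn_snd : ContDiffOn ℝ ∞ b W
  eq_fst : ∀ z ∈ W, firstOrderOp K (xDir p) a z - pdSr p b z = (c / z.2) • b z
  eq_snd : ∀ z ∈ W, firstOrderOp Kb (xDir p) b z + pdSr p a z = 0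

namespace IsSystemSolutionOn

variable {K Kb : Fin (p + 1) → F →L[ℝ] F} {c : ℝ} {a b : (Fin (p + 1) → ℝ) × ℝ → F}

theorem mono {W' : Set ((Fin (p + 1) → ℝ) × ℝ)} (h : IsSystemSolutionOn K Kb c W a b)
    (hW' : W' ⊆ W) : IsSystemSolutionOn K Kb c W' a b where
  contDiffOn_fst := h.contDiffOn_fst.mono hW'
  contDiffOn_snd := h.contDiffOn_snd.mono hW'
  eq_fst z hz := h.eq_fst z (hW' hz)
  eq_snd z hz := h.eq_snd z (hW' hz)

theorem contDiffOn_T1 (h : IsSystemSolutionOn K Kb c W a b) (hW : IsOpen W)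
    (h0 : ∀ z ∈ W, z.2 ≠ 0) : ContDiffOn ℝ ∞ (T1 p a) W :=
  (contDiffOn_inv_snd_smul h0 (contDiffOn_pdSr hW h.contDiffOn_fst)).congr (T1_eqOn h0)

theorem contDiffOn_T2 (h : IsSystemSolutionOn K Kb c W a b) (hW : IsOpen W)
    (h0 : ∀ z ∈ W, z.2 ≠ 0) : ContDiffOn ℝ ∞ (T2 p b) W :=
  (contDiffOn_pdSr hW (contDiffOn_inv_snd_smul h0 h.contDiffOn_snd)).congr
    (T2_eqOn hW h0 (h.contDiffOn_snd.differentiableOn (by simp)))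

/-- The first equation, written with `b = r b₁`, has no singular coefficient. -/
theorem firstOrderOp_fst_eqOn (h : IsSystemSolutionOn K Kb c W a b) (hW : IsOpen W)
    (h0 : ∀ z ∈ W, z.2 ≠ 0) :
    EqOn (firstOrderOp K (xDir p) a)
      (fun z => (c + 1) • (z.2⁻¹ • b z) + z.2 • T2 p b z) W := by
  intro z hz
  have hb₁ : DifferentiableAt ℝ (fun y : (Fin (p + 1) → ℝ) × ℝ => y.2⁻¹ • b y) z :=
    ((contDiffOn_inv_snd_smul h0 h.contDiffOn_snd).differentiableOn (by simp)).differentiableAt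
      (hW.mem_nhds hz)
  have hb : EqOn b (fun y => y.2 • (y.2⁻¹ • b y)) W := fun y hy => by
    simp [smul_inv_smul₀ (h0 y hy)]
  have hdr : pdSr p b z = z.2 • T2 p b z + z.2⁻¹ • b z := by
    rw [pdSr_congr (hb.eventuallyEq_of_mem (hW.mem_nhds hz)), pdSr_snd_smul hb₁,
      T2_eqOn hW h0 (h.contDiffOn_snd.differentiableOn (by simp)) hz]
  rw [sub_eq_iff_eq_add.1 (h.eq_fst z hz), hdr, div_eq_mul_inv]
  module

theorem firstOrderOp_snd_eqOn (h : IsSystemSolutionOn K Kb c W a b) (hW : IsOpen W)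
    (h0 : ∀ z ∈ W, z.2 ≠ 0) :
    EqOn (firstOrderOp Kb (xDir p) fun z => z.2⁻¹ • b z) (fun z => -T1 p a z) W := by
  intro z hz
  have hb := (h.contDiffOn_snd.differentiableOn (by simp)).differentiableAt (hW.mem_nhds hz)
  simp only [firstOrderOp_xDir_inv_snd_smul Kb (h0 z hz) hb, T1_eqOn h0 hz,
    eq_neg_of_add_eq_zero_left (h.eq_snd z hz), smul_neg]

theorem pdSr_firstOrderOp_fst (h : IsSystemSolutionOn K Kb c W a b) (hW : IsOpen W)
    (h0 : ∀ z ∈ W, z.2 ≠ 0) (hz : z ∈ W) :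
    pdSr p (firstOrderOp K (xDir p) a) z = (c + 2) • T2 p b z + z.2 • pdSr p (T2 p b) z := by
  have hWz := hW.mem_nhds hz
  have hb₁ : DifferentiableAt ℝ (fun y : (Fin (p + 1) → ℝ) × ℝ => y.2⁻¹ • b y) z :=
    ((contDiffOn_inv_snd_smul h0 h.contDiffOn_snd).contDiffAt hWz).differentiableAt (by simp)
  have hT2b : DifferentiableAt ℝ (T2 p b) z :=
    ((h.contDiffOn_T2 hW h0).contDiffAt hWz).differentiableAt (by simp)
  rw [pdSr_congr ((h.firstOrderOp_fst_eqOn hW h0).eventuallyEq_of_mem hWz),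
    pdSr_add (hb₁.fun_const_smul _) (differentiableAt_snd.fun_smul hT2b),
    pdSr_const_smul _ hb₁, pdSr_snd_smul hT2b,
    ← T2_eqOn hW h0 (h.contDiffOn_snd.differentiableOn (by simp)) hz]
  module

theorem T1_T2 (h : IsSystemSolutionOn K Kb c W a b) (hW : IsOpen W) (h0 : ∀ z ∈ W, z.2 ≠ 0) :
    IsSystemSolutionOn K Kb (c + 2) W (T1 p a) (T2 p b) where
  contDiffOn_fst := h.contDiffOn_T1 hW h0
  contDiffOn_snd := h.contDiffOn_T2 hW h0
  eq_fst z hz := by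
    have hWz := hW.mem_nhds hz
    have hda : DifferentiableAt ℝ (pdSr p a) z :=
      ((contDiffOn_pdSr hW h.contDiffOn_fst).contDiffAt hWz).differentiableAt (by simp)
    calc firstOrderOp K (xDir p) (T1 p a) z - pdSr p (T2 p b) z
      _ = z.2⁻¹ • firstOrderOp K (xDir p) (pdSr p a) z - pdSr p (T2 p b) z := by
        rw [firstOrderOp_congr ((T1_eqOn h0).eventuallyEq_of_mem hWz),
          firstOrderOp_xDir_inv_snd_smul K (h0 z hz) hda]
      _ = z.2⁻¹ • pdSr p (firstOrderOp K (xDir p) a) z - pdSr p (T2 p b) z := by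
        rw [firstOrderOp_pdSr _ _ ((h.contDiffOn_fst.contDiffAt hWz).of_le ENat.LEInfty.out)]
      _ = ((c + 2) / z.2) • T2 p b z := by
        rw [h.pdSr_firstOrderOp_fst hW h0 hz, smul_add, inv_smul_smul₀ (h0 z hz),
          add_sub_cancel_right, smul_smul, inv_mul_eq_div]
  eq_snd z hz := by
    have hWz := hW.mem_nhds hz
    have hT2 := T2_eqOn hW h0 (h.contDiffOn_snd.differentiableOn (by simp))
    have hb₁ := (contDiffOn_inv_snd_smul h0 h.contDiffOn_snd).contDiffAt hWz
    calc firstOrderOp Kb (xDir p) (T2 p b) z + pdSr p (T1 p a) z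
      _ = pdSr p (firstOrderOp Kb (xDir p) fun y => y.2⁻¹ • b y) z + pdSr p (T1 p a) z := by
        rw [firstOrderOp_congr (hT2.eventuallyEq_of_mem hWz),
          firstOrderOp_pdSr _ _ (hb₁.of_le ENat.LEInfty.out)]
      _ = 0 := by
        rw [pdSr_congr ((h.firstOrderOp_snd_eqOn hW h0).eventuallyEq_of_mem hWz)]
        simp [pdSr]

theorem iterate_T1_T2 (h : IsSystemSolutionOn K Kb 0 W a b) (hW : IsOpen W)
    (h0 : ∀ z ∈ W, z.2 ≠ 0) (k : ℕ) :
    IsSystemSolutionOn K Kb (2 * k) W ((T1 p)^[k] a) ((T2 p)^[k] b) := by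
  induction k with
  | zero => simpa using h
  | succ k ih =>
    rw [Function.iterate_succ_apply', Function.iterate_succ_apply', Nat.cast_succ, mul_add_one]
    exact ih.T1_T2 hW h0

end IsSystemSolutionOn

end CauchyRiemannRecursion

section FactorsLaplacian

variable {κ F G : Type*} [NormedAddCommGroup F] [NormedSpace ℝ F] [NormedAddCommGroup G]
  [NormedSpace ℝ G]

/-- The Clifford relations saying that the first-order operators with coefficients `Q` and `P`
factor the Laplacian: `(∑ i, Q i ∂_i) (∑ j, P j ∂_j) = ∑ i, ∂_i ^ 2`. -/
structure FactorsLaplacian (Q : κ → G →L[ℝ] F) (P : κ → F →L[ℝ] G) : Prop where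
  apply_apply_self : ∀ i x, Q i (P i x) = x
  anticomm : Pairwise fun i j => ∀ x, Q i (P j x) + Q j (P i x) = 0

theorem FactorsLaplacian.sum_sum_of_symm [Fintype κ] {Q : κ → G →L[ℝ] F} {P : κ → F →L[ℝ] G}
    (h : FactorsLaplacian Q P) {T : κ → κ → F} (hT : ∀ i j, T i j = T j i) :
    ∑ i, ∑ j, Q i (P j (T i j)) = ∑ i, T i i := by
  classical
  have hpair : ∀ i j, Q i (P j (T i j)) + Q j (P i (T j i)) =
      if i = j then (2 : ℝ) • T i i else 0 := by
    intro i j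
    split_ifs with hij
    · rw [← hij, h.apply_apply_self, two_smul]
    · rw [hT j i, h.anticomm hij]
  apply smul_right_injective F (two_ne_zero (α := ℝ))
  calc (2 : ℝ) • ∑ i, ∑ j, Q i (P j (T i j))
    _ = ∑ i, ∑ j, (Q i (P j (T i j)) + Q j (P i (T j i))) := by
      simp_rw [Finset.sum_add_distrib]
      rw [Finset.sum_comm (f := fun i j => Q j (P i (T j i))), two_smul]
    _ = (2 : ℝ) • ∑ i, T i i := by simp [hpair, Finset.smul_sum]

end FactorsLaplacian

section WeakHarmonicity

variable {E F κ : Type*} [NormedAddCommGroup E] [MeasurableSpace E]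
  [NormedAddCommGroup F] [NormedSpace ℝ F] [Fintype κ]
  {μ : Measure E} {e : κ → E} {u : E → F} {ψ : E → ℝ} {U V : Set E}

theorem integrable_smul_of_tsupport_subset [BorelSpace E] [IsFiniteMeasureOnCompacts μ]
    {g : E → F} (hψ : Continuous ψ) (hψc : HasCompactSupport ψ) (hV : IsOpen V)
    (hψV : tsupport ψ ⊆ V) (hg : ContinuousOn g V) : Integrable (fun y => ψ y • g y) μ :=
  ((hψ.continuousOn.smul hg).continuous_of_tsupport_subset hV
    ((tsupport_smul_subset_left ψ g).trans hψV)).integrable_of_hasCompactSupport hψc.smul_right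

variable [NormedSpace ℝ E]

/-- Weak harmonicity on `V`, for the Laplacian `∑ i, ∂_{e i} ^ 2`, of a `C¹` map `u`: the
Dirichlet pairing of `u` with every test function supported in `V` vanishes. -/
def IsWeaklyHarmonicOn (μ : Measure E) (e : κ → E) (u : E → F) (V : Set E) : Prop :=
  ∀ ψ : E → ℝ, ContDiff ℝ ∞ ψ → HasCompactSupport ψ → tsupport ψ ⊆ V →
    ∑ i, ∫ y, fderiv ℝ ψ y (e i) • fderiv ℝ u y (e i) ∂μ = 0

theorem IsWeaklyHarmonicOn.of_eqOn {w : E → F} (h : IsWeaklyHarmonicOn μ e u V) (hU : IsOpen U)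
    (hUV : U ⊆ V) (huw : EqOn w u U) : IsWeaklyHarmonicOn μ e w U := by
  intro ψ hψ hψc hψU
  rw [← h ψ hψ hψc (hψU.trans hUV)]
  congr! 3 with i - y
  by_cases hy : y ∈ U
  · rw [(huw.eventuallyEq_of_mem (hU.mem_nhds hy)).fderiv_eq]
  · simp [fderiv_apply_eq_zero_of_notMem hψU hy]

variable [BorelSpace E]

theorem integrable_fderiv_smul_fderiv [IsFiniteMeasureOnCompacts μ] (hψ : ContDiff ℝ 1 ψ)
    (hψc : HasCompactSupport ψ) (hV : IsOpen V) (hψV : tsupport ψ ⊆ V) (hu : ContDiffOn ℝ 1 u V)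
    (a b : E) : Integrable (fun y => fderiv ℝ ψ y a • fderiv ℝ u y b) μ :=
  integrable_smul_of_tsupport_subset
    ((hψ.continuous_fderiv one_ne_zero).clm_apply continuous_const) (hψc.fderiv_apply ℝ a) hV
    ((tsupport_fderiv_apply_subset ℝ a).trans hψV)
    ((hu.continuousOn_fderiv_of_isOpen hV le_rfl).clm_apply continuousOn_const)

variable [FiniteDimensional ℝ E] [μ.IsAddHaarMeasure]

theorem integral_fderiv_smul_fderiv_comm (hψ : ContDiff ℝ 2 ψ) (hψc : HasCompactSupport ψ)
    (hV : IsOpen V) (hψV : tsupport ψ ⊆ V) (hu : ContDiffOn ℝ 1 u V) (a b : E) :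
    ∫ y, fderiv ℝ ψ y a • fderiv ℝ u y b ∂μ = ∫ y, fderiv ℝ ψ y b • fderiv ℝ u y a ∂μ := by
  have hdψ : ∀ a, ContDiff ℝ 1 fun y => fderiv ℝ ψ y a := fun a =>
    (hψ.fderiv_right (by norm_num)).clm_apply contDiff_const
  have hdψV : ∀ a, tsupport (fun y => fderiv ℝ ψ y a) ⊆ V := fun a =>
    (tsupport_fderiv_apply_subset ℝ a).trans hψV
  have by_parts : ∀ a b, ∫ y, fderiv ℝ ψ y a • fderiv ℝ u y b ∂μ =
      -∫ y, fderiv ℝ (fun y => fderiv ℝ ψ y a) y b • u y ∂μ := by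
    intro a b
    refine integral_smul_fderiv_eq_neg_fderiv_smul_of_integrable ?_
      (integrable_fderiv_smul_fderiv (hψ.of_le one_le_two) hψc hV hψV hu a b) ?_
      (fun x _ => (hdψ a).differentiable one_ne_zero x)
      (fun x hx => (hu.differentiableOn one_ne_zero).differentiableAt (hV.mem_nhds (hdψV a hx)))
    · exact integrable_smul_of_tsupport_subset
        (((hdψ a).continuous_fderiv one_ne_zero).clm_apply continuous_const)
        ((hψc.fderiv_apply ℝ a).fderiv_apply ℝ b) hV
        ((tsupport_fderiv_apply_subset ℝ b).trans (hdψV a)) hu.continuousOn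
    · exact integrable_smul_of_tsupport_subset (hdψ a).continuous (hψc.fderiv_apply ℝ a) hV
        (hdψV a) hu.continuousOn
  simp only [by_parts, fderiv_fderiv_apply_comm hψ.contDiffAt a b]

theorem FactorsLaplacian.isWeaklyHarmonicOn {G : Type*} [NormedAddCommGroup G] [NormedSpace ℝ G]
    [CompleteSpace F] [CompleteSpace G] {Q : κ → G →L[ℝ] F} {P : κ → F →L[ℝ] G}
    (h : FactorsLaplacian Q P) (hV : IsOpen V) (hu : ContDiffOn ℝ 1 u V)
    (hPu : ∀ z ∈ V, firstOrderOp P e u z = 0) : IsWeaklyHarmonicOn μ e u V := by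
  intro ψ hψ hψc hψV
  have hint := integrable_fderiv_smul_fderiv (μ := μ) (hψ.of_le ENat.LEInfty.out) hψc hV hψV hu
  have hP : ∀ a, ∑ j, P j (∫ y, fderiv ℝ ψ y a • fderiv ℝ u y (e j) ∂μ) = 0 := by
    intro a
    calc ∑ j, P j (∫ y, fderiv ℝ ψ y a • fderiv ℝ u y (e j) ∂μ)
      _ = ∫ y, fderiv ℝ ψ y a • firstOrderOp P e u y ∂μ := by
        simp_rw [← (P _).integral_comp_comm (hint a _), firstOrderOp, Finset.smul_sum]
        rw [← integral_finsetSum _ fun j _ => (P j).integrable_comp (hint a _)]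
        simp
      _ = 0 := by
        refine integral_eq_zero_of_ae (.of_forall fun y => ?_)
        by_cases hy : y ∈ V
        · simp [hPu y hy]
        · simp [fderiv_apply_eq_zero_of_notMem hψV hy]
  rw [← h.sum_sum_of_symm fun i j =>
    integral_fderiv_smul_fderiv_comm (hψ.of_le ENat.LEInfty.out) hψc hV hψV hu (e i) (e j)]
  simp [← map_sum, hP]

end WeakHarmonicity

section RadialPotentials

variable {E κ : Type*} [NormedAddCommGroup E] [NormedSpace ℝ E]
  {b : Module.Basis κ ℝ E} {ψ φ : E → ℝ}

/-- The square of the Euclidean norm of the coordinates in the basis `b`. -/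
noncomputable def sumSqCoord [Fintype κ] (b : Module.Basis κ ℝ E) (y : E) : ℝ :=
  ∑ i, b.repr y i ^ 2

/-- `ψ` and `φ` are test functions with `∇ψ y = φ y • y` in the coordinates of `b`. -/
structure IsRadialPotential (b : Module.Basis κ ℝ E) (ψ φ : E → ℝ) : Prop where
  contDiff_potential : ContDiff ℝ ∞ ψ
  contDiff_density : ContDiff ℝ ∞ φ
  hasCompactSupport_potential : HasCompactSupport ψ
  hasCompactSupport_density : HasCompactSupport φ
  fderiv_apply : ∀ y i, fderiv ℝ ψ y (b i) = φ y * b.repr y i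

variable [FiniteDimensional ℝ E]

theorem contDiff_sumSqCoord [Fintype κ] (b : Module.Basis κ ℝ E) : ContDiff ℝ ∞ (sumSqCoord b) :=
  .sum fun i _ => (b.coord i).toContinuousLinearMap.contDiff.pow 2

theorem fderiv_sumSqCoord_apply [Fintype κ] (b : Module.Basis κ ℝ E) (y : E) (i : κ) :
    fderiv ℝ (sumSqCoord b) y (b i) = 2 * b.repr y i := by
  classical
  have hsum : HasFDerivAt (sumSqCoord b)
      (∑ j, (2 * b.repr y j) • (b.coord j).toContinuousLinearMap) y :=
    .fun_sum fun j _ => by simpa using (b.coord j).toContinuousLinearMap.hasFDerivAt.pow 2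
  simp [hsum.fderiv, Finsupp.single_apply]

theorem isCompact_sumSqCoord_le_one [Fintype κ] (b : Module.Basis κ ℝ E) :
    IsCompact {y | sumSqCoord b y ≤ 1} := by
  have hcube : IsCompact (b.equivFun.toContinuousLinearEquiv.toHomeomorph ⁻¹'
      Metric.closedBall (0 : κ → ℝ) 1) :=
    (Homeomorph.isCompact_preimage _).2 (isCompact_closedBall _ _)
  refine hcube.of_isClosed_subset (isClosed_le (contDiff_sumSqCoord b).continuous
    continuous_const) fun y hy => ?_
  have hle : ∀ i, b.repr y i ^ 2 ≤ 1 := fun i =>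
    (Finset.single_le_sum (f := fun i => b.repr y i ^ 2) (fun _ _ => sq_nonneg _)
      (Finset.mem_univ i)).trans hy
  simpa [pi_norm_le_iff_of_nonneg] using hle

theorem isRadialPotential_comp_sumSqCoord [Fintype κ] (b : Module.Basis κ ℝ E) {P : ℝ → ℝ}
    (hP : ContDiff ℝ ∞ P) (hP0 : ∀ s, 1 ≤ s → P s = 0) :
    IsRadialPotential b (P ∘ sumSqCoord b) fun y => 2 * deriv P (sumSqCoord b y) := by
  have hQ := contDiff_sumSqCoord b
  have hdP0 : ∀ s, 1 < s → deriv P s = 0 := fun s hs => by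
    rw [EventuallyEq.deriv_eq (f := fun _ => 0)
      ((lt_mem_nhds hs).mono fun t ht => hP0 t ht.le), deriv_const]
  refine ⟨hP.comp hQ, contDiff_const.mul ((contDiff_infty_iff_deriv.1 hP).2.comp hQ),
    .intro (isCompact_sumSqCoord_le_one b) fun y hy => hP0 _ (not_le.1 hy).le,
    .intro (isCompact_sumSqCoord_le_one b) fun y hy => by simp [hdP0 _ (not_le.1 hy)],
    fun y i => ?_⟩
  rw [fderiv_comp _ (hP.differentiable (by simp) _) (hQ.differentiable (by simp) _)]
  rw [ContinuousLinearMap.comp_apply, fderiv_sumSqCoord_apply, fderiv_eq_smul_deriv, smul_eq_mul,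
    mul_right_comm]

theorem exists_isRadialPotential_integral_pos [Finite κ] [Nonempty κ] [MeasurableSpace E]
    [BorelSpace E] (μ : Measure E) [μ.IsAddHaarMeasure] (b : Module.Basis κ ℝ E) :
    ∃ ψ φ, IsRadialPotential b ψ φ ∧ 0 < ∫ y, φ y ∂μ := by
  classical
  have := Fintype.ofFinite κ
  let P : ℝ → ℝ := fun s => -Real.smoothTransition (1 - s)
  have hP : ContDiff ℝ ∞ P :=
    (Real.smoothTransition.contDiff.comp (contDiff_const.sub contDiff_id)).neg
  have hPmono : Monotone P := fun s t hst =>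
    neg_le_neg (Real.smoothTransition.monotone (sub_le_sub_left hst 1))
  have hrad : IsRadialPotential b (P ∘ sumSqCoord b) fun y => 2 * deriv P (sumSqCoord b y) :=
    isRadialPotential_comp_sumSqCoord b hP fun s hs => by
      simp [P, Real.smoothTransition.zero_of_nonpos (sub_nonpos.2 hs)]
  obtain ⟨s, hs, hPs⟩ : ∃ s ∈ Ioo (0 : ℝ) 1, deriv P s = (P 1 - P 0) / (1 - 0) :=
    exists_deriv_eq_slope P one_pos hP.continuous.continuousOn
      (hP.differentiable (by simp)).differentiableOn
  have hQs : sumSqCoord b (√s • b (Classical.arbitrary κ)) = s := by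
    simp [sumSqCoord, Finsupp.single_apply, Real.sq_sqrt hs.1.le]
  refine ⟨_, _, hrad, hrad.contDiff_density.continuous
    |>.integral_pos_of_hasCompactSupport_nonneg_nonzero hrad.hasCompactSupport_density
    (fun y => mul_nonneg two_pos.le hPmono.deriv_nonneg)
    (x := √s • b (Classical.arbitrary κ)) ?_⟩
  simp [hQs, hPs, P]

end RadialPotentials

section ScaledMeans

variable {E F κ : Type*} [NormedAddCommGroup E] [NormedSpace ℝ E] [NormedAddCommGroup F]
  [NormedSpace ℝ F] {ψ φ : E → ℝ} {u : E → F} {x : E} {δ : ℝ}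

/-- The test function `ψ` rescaled to size `δ` and recentred at `x`. -/
noncomputable def recentred (ψ : E → ℝ) (x : E) (δ : ℝ) (t : E) : ℝ :=
  ψ (δ⁻¹ • (x - t))

theorem contDiff_recentred (hψ : ContDiff ℝ ∞ ψ) : ContDiff ℝ ∞ (recentred ψ x δ) :=
  hψ.comp (by fun_prop)

theorem hasCompactSupport_recentred (hψ : HasCompactSupport ψ) (hδ : δ ≠ 0) :
    HasCompactSupport (recentred ψ x δ) :=
  hψ.comp_homeomorph ((Homeomorph.subLeft x).trans (.smulOfNeZero δ⁻¹ (inv_ne_zero hδ)))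

theorem tsupport_recentred_subset {R : ℝ} (hψR : tsupport ψ ⊆ Metric.closedBall 0 R)
    (hδ : 0 < δ) : tsupport (recentred ψ x δ) ⊆ Metric.closedBall x (δ * R) := by
  refine closure_minimal (fun t ht => ?_) Metric.isClosed_closedBall
  have hmem := mem_closedBall_zero_iff.1 (hψR (subset_tsupport ψ ht))
  rw [norm_smul, norm_inv, Real.norm_of_nonneg hδ.le, inv_mul_le_iff₀ hδ] at hmem
  rwa [mem_closedBall_iff_norm']

theorem fderiv_recentred_apply (hψ : Differentiable ℝ ψ) (t a : E) :
    fderiv ℝ (recentred ψ x δ) t a = -δ⁻¹ * fderiv ℝ ψ (δ⁻¹ • (x - t)) a := by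
  have haff : HasFDerivAt (fun t : E => δ⁻¹ • (x - t)) (δ⁻¹ • -ContinuousLinearMap.id ℝ E) t :=
    ((hasFDerivAt_id t).const_sub x).const_smul δ⁻¹
  have hcomp : HasFDerivAt (recentred ψ x δ) _ t := (hψ _).hasFDerivAt.comp t haff
  simp [hcomp.fderiv]

theorem IsRadialPotential.sum_fderiv_recentred_smul [Fintype κ] {b : Module.Basis κ ℝ E}
    (h : IsRadialPotential b ψ φ) (L : E →L[ℝ] F) (t : E) :
    ∑ i, fderiv ℝ (recentred ψ x δ) t (b i) • L (b i) =
      δ⁻¹ • φ (δ⁻¹ • (x - t)) • L (-(δ⁻¹ • (x - t))) := by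
  have hψ : Differentiable ℝ ψ := h.contDiff_potential.differentiable (by simp)
  set y := δ⁻¹ • (x - t) with hy
  calc ∑ i, fderiv ℝ (recentred ψ x δ) t (b i) • L (b i)
    _ = ∑ i, (-δ⁻¹ * φ y) • L (b.repr y i • b i) := by
      simp only [fderiv_recentred_apply hψ, ← hy, h.fderiv_apply, map_smul, smul_smul, mul_assoc]
    _ = (-δ⁻¹ * φ y) • L y := by rw [← Finset.smul_sum, ← map_sum, b.sum_repr]
    _ = δ⁻¹ • φ y • L (-y) := by rw [map_neg]; module

variable [MeasurableSpace E] {μ : Measure E}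

/-- The mean of `u`, with weight `φ`, at distances of order `δ` from `x`. -/
noncomputable def scaledMean (μ : Measure E) (φ : E → ℝ) (u : E → F) (x : E) (δ : ℝ) : F :=
  ∫ y, φ y • u (x - δ • y) ∂μ

theorem scaledMean_zero [CompleteSpace F] : scaledMean μ φ u x 0 = (∫ y, φ y ∂μ) • u x := by
  simp [scaledMean, integral_smul_const]

variable [FiniteDimensional ℝ E] [BorelSpace E] [μ.IsAddHaarMeasure]

theorem hasDerivAt_scaledMean (hφ : Continuous φ) (hφc : HasCompactSupport φ)
    (hu : ContDiff ℝ 1 u) (huc : HasCompactSupport u) :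
    HasDerivAt (scaledMean μ φ u x) (∫ y, φ y • fderiv ℝ u (x - δ • y) (-y) ∂μ) δ := by
  have hdu : Continuous (fderiv ℝ u) := hu.continuous_fderiv one_ne_zero
  obtain ⟨C, hC⟩ := hdu.bounded_above_of_compact_support (huc.fderiv ℝ)
  have hcont : ∀ s : ℝ, Continuous fun y => φ y • u (x - s • y) := fun s =>
    hφ.smul (hu.continuous.comp (by fun_prop))
  refine (hasDerivAt_integral_of_dominated_loc_of_deriv_le (s := univ)
    (F := fun s y => φ y • u (x - s • y)) (F' := fun s y => φ y • fderiv ℝ u (x - s • y) (-y))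
    (bound := fun y => ‖φ y‖ * (C * ‖y‖)) univ_mem
    (.of_forall fun s => (hcont s).aestronglyMeasurable)
    ((hcont δ).integrable_of_hasCompactSupport hφc.smul_right)
    (hφ.smul ((hdu.comp (by fun_prop)).clm_apply continuous_neg)).aestronglyMeasurable
    (.of_forall fun y s _ => ?_)
    ((hφ.norm.mul (continuous_const.mul continuous_norm)).integrable_of_hasCompactSupport
      hφc.norm.mul_right)
    (.of_forall fun y s _ => ?_)).2
  · calc ‖φ y • fderiv ℝ u (x - s • y) (-y)‖
      _ ≤ ‖φ y‖ * (‖fderiv ℝ u (x - s • y)‖ * ‖y‖) := by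
        rw [norm_smul, ← norm_neg y]
        gcongr
        exact ContinuousLinearMap.le_opNorm _ _
      _ ≤ ‖φ y‖ * (C * ‖y‖) := by gcongr; exact hC _
  · have hline : HasDerivAt (fun s : ℝ => x - s • y) (-y) s := by
      simpa using ((hasDerivAt_id s).smul_const y).const_sub x
    exact ((hu.differentiable one_ne_zero _).hasFDerivAt.comp_hasDerivAt s hline).const_smul (φ y)

theorem contDiff_scaledMean (hφ : ContDiff ℝ ∞ φ) (hφc : HasCompactSupport φ)
    (hu : Continuous u) (hδ : δ ≠ 0) : ContDiff ℝ ∞ fun x => scaledMean μ φ u x δ := by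
  let g : E → ℝ := fun t => φ (δ⁻¹ • t)
  have hg : ContDiff ℝ ∞ g := hφ.comp (by fun_prop)
  have hgc : HasCompactSupport g :=
    hφc.comp_homeomorph (.smulOfNeZero δ⁻¹ (inv_ne_zero hδ))
  have hconv : ContDiff ℝ ∞ (convolution g u (ContinuousLinearMap.lsmul ℝ ℝ) μ) :=
    hgc.contDiff_convolution_left (n := ⊤) _ hg hu.locallyIntegrable
  convert hconv.const_smul |(δ ^ Module.finrank ℝ E)⁻¹| using 1
  ext x
  simp only [convolution_def, ContinuousLinearMap.lsmul_apply]
  rw [← Measure.integral_comp_smul μ (fun t => g t • u (x - t)) δ]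
  simp [scaledMean, g, inv_smul_smul₀ hδ]

variable [Fintype κ] {b : Module.Basis κ ℝ E} {V : Set E}

theorem IsRadialPotential.hasDerivAt_scaledMean_zero (h : IsRadialPotential b ψ φ)
    (hu : ContDiff ℝ 1 u) (huc : HasCompactSupport u) (hw : IsWeaklyHarmonicOn μ b u V)
    (hδ : δ ≠ 0) (hψV : tsupport (recentred ψ x δ) ⊆ V) :
    HasDerivAt (scaledMean μ φ u x) 0 δ := by
  let g : E → F := fun t => φ (δ⁻¹ • (x - t)) • fderiv ℝ u t (-(δ⁻¹ • (x - t)))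
  have hψ : ContDiff ℝ ∞ (recentred ψ x δ) := contDiff_recentred h.contDiff_potential
  have hψc : HasCompactSupport (recentred ψ x δ) :=
    hasCompactSupport_recentred h.hasCompactSupport_potential hδ
  have hg : ∫ t, g t ∂μ = 0 := by
    have hweak := hw _ hψ hψc hψV
    rw [← integral_finsetSum _ fun i _ => integrable_fderiv_smul_fderiv
      (hψ.of_le ENat.LEInfty.out) hψc isOpen_univ (subset_univ _) hu.contDiffOn _ _] at hweak
    simp_rw [h.sum_fderiv_recentred_smul] at hweak
    rw [integral_smul] at hweak
    exact (smul_eq_zero_iff_right (inv_ne_zero hδ)).1 hweak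
  convert hasDerivAt_scaledMean (μ := μ) h.contDiff_density.continuous
    h.hasCompactSupport_density hu huc
  calc (0 : F)
    _ = ∫ y, g (x - δ • y) ∂μ := by
      rw [Measure.integral_comp_smul μ (fun t => g (x - t)), integral_sub_left_eq_self g μ x, hg,
        smul_zero]
    _ = ∫ y, φ y • fderiv ℝ u (x - δ • y) (-y) ∂μ := by simp [g, inv_smul_smul₀ hδ]

theorem IsRadialPotential.scaledMean_eq_integral_smul [CompleteSpace F]
    (h : IsRadialPotential b ψ φ) (hu : ContDiff ℝ 1 u) (huc : HasCompactSupport u)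
    (hw : IsWeaklyHarmonicOn μ b u V) (hδ : 0 ≤ δ)
    (hψV : ∀ s ∈ Ioc 0 δ, tsupport (recentred ψ x s) ⊆ V) :
    scaledMean μ φ u x δ = (∫ y, φ y ∂μ) • u x := by
  have hcont : Continuous (scaledMean μ φ u x) := continuous_iff_continuousAt.2 fun s =>
    (hasDerivAt_scaledMean h.contDiff_density.continuous h.hasCompactSupport_density hu
      huc).continuousAt
  have hconst := constant_of_has_deriv_right_zero (f := fun s => scaledMean μ φ u x (δ - s))
    (hcont.comp (continuous_sub_left δ)).continuousOn (fun s hs => by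
      have hpos : 0 < δ - s := sub_pos.2 hs.2
      simpa using ((h.hasDerivAt_scaledMean_zero hu huc hw hpos.ne'
        (hψV _ ⟨hpos, sub_le_self δ hs.1⟩)).comp_const_sub δ s).hasDerivWithinAt)
    δ (right_mem_Icc.2 hδ)
  rw [← scaledMean_zero, ← sub_self δ, hconst, sub_zero]

end ScaledMeans

section WeylLemma

variable {E F κ : Type*} [NormedAddCommGroup E] [NormedSpace ℝ E] [FiniteDimensional ℝ E]
  [NormedAddCommGroup F] [NormedSpace ℝ F] {u : E → F} {x : E} {V : Set E}

theorem exists_contDiff_hasCompactSupport_eventuallyEq_s12 {n : ℕ} (hV : V ∈ 𝓝 x)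
    (hu : ContDiffOn ℝ n u V) :
    ∃ w : E → F, ContDiff ℝ n w ∧ HasCompactSupport w ∧ w =ᶠ[𝓝 x] u := by
  obtain ⟨ε, hε, hεV⟩ := Metric.mem_nhds_iff.1 hV
  let χ : ContDiffBump x := ⟨ε / 4, ε / 2, by positivity, by linarith⟩
  have hχV : tsupport χ ⊆ Metric.ball x ε := by
    rw [χ.tsupport_eq]
    exact Metric.closedBall_subset_ball (half_lt_self hε)
  refine ⟨fun y => χ y • u y, contDiff_iff_contDiffAt.2 fun y => ?_,
    χ.hasCompactSupport.smul_right, χ.eventuallyEq_one.mono fun y hy => by simp [hy]⟩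
  by_cases hy : y ∈ tsupport χ
  · exact χ.contDiffAt.smul ((hu.mono hεV).contDiffAt (Metric.isOpen_ball.mem_nhds (hχV hy)))
  · have hzero : (fun y => χ y • u y) =ᶠ[𝓝 y] fun _ => 0 :=
      (notMem_tsupport_iff_eventuallyEq.1 hy).mono fun t ht => by simp [ht]
    exact contDiffAt_const.congr_of_eventuallyEq hzero

variable [CompleteSpace F] [MeasurableSpace E] [BorelSpace E] {μ : Measure E}
  [μ.IsAddHaarMeasure] [Fintype κ] [Nonempty κ] {b : Module.Basis κ ℝ E}

/-- Weyl's lemma: near `x` the means at a fixed small scale, which are smooth, coincide with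
those at scale zero, a nonzero multiple of `u`. -/
theorem IsWeaklyHarmonicOn.contDiffAt (hw : IsWeaklyHarmonicOn μ b u V) (hu : ContDiff ℝ 1 u)
    (huc : HasCompactSupport u) (hV : V ∈ 𝓝 x) : ContDiffAt ℝ ∞ u x := by
  obtain ⟨ψ, φ, hψφ, hφ⟩ := exists_isRadialPotential_integral_pos μ b
  obtain ⟨ε, hε, hεV⟩ := Metric.mem_nhds_iff.1 hV
  obtain ⟨R, hR, hψR⟩ :=
    hψφ.hasCompactSupport_potential.isBounded.subset_closedBall_lt 0 (0 : E)
  have hδ : 0 < ε / (4 * R) := by positivity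
  have hsupp : ∀ y ∈ Metric.ball x (ε / 2), ∀ s ∈ Ioc 0 (ε / (4 * R)),
      tsupport (recentred ψ y s) ⊆ V := by
    intro y hy s hs
    refine (tsupport_recentred_subset hψR hs.1).trans
      ((Metric.closedBall_subset_ball' ?_).trans hεV)
    have hsR : s * R ≤ ε / 4 := by
      rw [← le_div_iff₀ hR, div_div]
      exact hs.2
    linarith [Metric.mem_ball.1 hy]
  have hmean : u =ᶠ[𝓝 x] fun y => (∫ y, φ y ∂μ)⁻¹ • scaledMean μ φ u y (ε / (4 * R)) := by
    filter_upwards [Metric.ball_mem_nhds x (half_pos hε)] with y hy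
    rw [hψφ.scaledMean_eq_integral_smul hu huc hw hδ.le (hsupp y hy), inv_smul_smul₀ hφ.ne']
  exact ((contDiff_scaledMean hψφ.contDiff_density hψφ.hasCompactSupport_density hu.continuous
    hδ.ne').const_smul _).contDiffAt.congr_of_eventuallyEq hmean

theorem IsWeaklyHarmonicOn.contDiffOn (hw : IsWeaklyHarmonicOn μ b u V) (hV : IsOpen V)
    (hu : ContDiffOn ℝ 1 u V) : ContDiffOn ℝ ∞ u V := by
  intro x hx
  obtain ⟨w, hwC, hwc, hwu⟩ := exists_contDiff_hasCompactSupport_eventuallyEq_s12 (hV.mem_nhds hx) hu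
  obtain ⟨U, hU, hUo, hxU⟩ := mem_nhds_iff.1 (hwu.and (hV.mem_nhds hx))
  have hwU : IsWeaklyHarmonicOn μ b w U :=
    hw.of_eqOn hUo (fun y hy => (hU hy).2) fun y hy => (hU hy).1
  exact ((hwU.contDiffAt hwC hwc (hUo.mem_nhds hxU)).congr_of_eventuallyEq
    hwu.symm).contDiffWithinAt

theorem FactorsLaplacian.contDiffOn {G : Type*} [NormedAddCommGroup G] [NormedSpace ℝ G]
    [CompleteSpace G] {Q : κ → G →L[ℝ] F} {P : κ → F →L[ℝ] G} (h : FactorsLaplacian Q P)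
    (b : Module.Basis κ ℝ E) (hV : IsOpen V) (hu : ContDiffOn ℝ 1 u V)
    (hPu : ∀ z ∈ V, firstOrderOp P b u z = 0) : ContDiffOn ℝ ∞ u V := by
  borelize E
  exact (h.isWeaklyHarmonicOn (μ := Measure.addHaar) hV hu hPu).contDiffOn hV hu

end WeylLemma

section ReflectionParity

variable {F : Type*} [NormedAddCommGroup F] [NormedSpace ℝ F] {p : ℕ}
  {D : Set ((Fin (p + 1) → ℝ) × ℝ)} {σ : ℝ} {u : (Fin (p + 1) → ℝ) × ℝ → F}
  {z : (Fin (p + 1) → ℝ) × ℝ}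

/-- `u (x_p, -r) = σ u (x_p, r)` on `D`: evenness for `σ = 1`, oddness for `σ = -1`. -/
def HasReflParityOn (p : ℕ) (D : Set ((Fin (p + 1) → ℝ) × ℝ)) (σ : ℝ)
    (u : (Fin (p + 1) → ℝ) × ℝ → F) : Prop :=
  ∀ z ∈ D, u (reflD p z) = σ • u z

theorem reflD_eq_self (h0 : z.2 = 0) : reflD p z = z := by
  ext <;> simp [reflD, h0]

theorem HasReflParityOn.fderiv_reflD (h : HasReflParityOn p D σ u) (hD : IsOpen D) (hz : z ∈ D)
    (a : (Fin (p + 1) → ℝ) × ℝ) :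
    fderiv ℝ u (reflD p z) (reflD p a) = σ • fderiv ℝ u z a := by
  let e : ((Fin (p + 1) → ℝ) × ℝ) ≃L[ℝ] ((Fin (p + 1) → ℝ) × ℝ) :=
    (ContinuousLinearEquiv.refl ℝ _).prodCongr (ContinuousLinearEquiv.neg ℝ)
  have hue : u ∘ e =ᶠ[𝓝 z] σ • u := EqOn.eventuallyEq_of_mem h (hD.mem_nhds hz)
  have hchain : (fderiv ℝ u (e z)).comp (e : _ →L[ℝ] _) = σ • fderiv ℝ u z := by
    rw [← e.comp_right_fderiv, hue.fderiv_eq, fderiv_const_smul_field]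
    rfl
  exact DFunLike.congr_fun hchain a

theorem hasReflParityOn_pdSr (hD : IsOpen D) (h : HasReflParityOn p D σ u) :
    HasReflParityOn p D (-σ) (pdSr p u) := by
  intro z hz
  have hdir : reflD p (0, 1) = -(0, 1) := by simp [reflD]
  rw [neg_smul, pdSr, pdSr, ← h.fderiv_reflD hD hz, hdir, map_neg, neg_neg]

theorem hasReflParityOn_pdSr2 (hD : IsOpen D) (h : HasReflParityOn p D σ u) :
    HasReflParityOn p D σ (pdSr2 p u) :=
  neg_neg σ ▸ hasReflParityOn_pdSr hD (hasReflParityOn_pdSr hD h)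

theorem hasReflParityOn_T1 (hD : IsOpen D) (h : HasReflParityOn p D σ u) :
    HasReflParityOn p D σ (T1 p u) := by
  intro z hz
  by_cases h0 : z.2 = 0
  · simpa [T1, reflD, h0] using hasReflParityOn_pdSr2 hD h z hz
  · have hneg : (reflD p z).2 ≠ 0 := neg_ne_zero.2 h0
    simp only [T1, h0, hneg, if_false]
    rw [hasReflParityOn_pdSr hD h z hz, smul_comm σ]
    simp [reflD, inv_neg]

theorem hasReflParityOn_T2 (hD : IsOpen D) (h : HasReflParityOn p D σ u) :
    HasReflParityOn p D σ (T2 p u) := by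
  intro z hz
  by_cases h0 : z.2 = 0
  · have hrefl : (reflD p z).2 = 0 := neg_eq_zero.2 h0
    simp only [T2, h0, hrefl, if_true]
    rw [hasReflParityOn_pdSr2 hD h z hz, smul_comm]
  · have hneg : (reflD p z).2 ≠ 0 := neg_ne_zero.2 h0
    let g : ℝ → F := fun t => t⁻¹ • u (z.1, t)
    have hg : (fun t => g (-t)) =ᶠ[𝓝 z.2] (-σ) • g := by
      filter_upwards [(Continuous.prodMk_right z.1).continuousAt.eventually (hD.mem_nhds hz)]
        with t ht
      have hut : u (z.1, -t) = σ • u (z.1, t) := h _ ht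
      simp only [g, hut, smul_comm _ σ, inv_neg, neg_smul, smul_neg, Pi.smul_apply]
    have hderiv : deriv g (-z.2) = σ • deriv g z.2 := by
      have hneg_deriv := hg.deriv_eq
      rwa [deriv_comp_neg, deriv_const_smul_field, neg_smul, neg_inj] at hneg_deriv
    simp only [T2, h0, hneg, if_false, fderiv_apply_one_eq_deriv]
    exact hderiv

theorem HasReflParityOn.iterate (h : HasReflParityOn p D σ u)
    {T : ((Fin (p + 1) → ℝ) × ℝ → F) → (Fin (p + 1) → ℝ) × ℝ → F}
    (hT : ∀ w, HasReflParityOn p D σ w → HasReflParityOn p D σ (T w)) (k : ℕ) :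
    HasReflParityOn p D σ (T^[k] u) :=
  Function.Iterate.rec (HasReflParityOn p D σ) h hT k

theorem HasReflParityOn.pdSr_eq_zero (h : HasReflParityOn p D 1 u) (hD : IsOpen D) (hz : z ∈ D)
    (h0 : z.2 = 0) : pdSr p u z = 0 := by
  have : IsAddTorsionFree F := .of_isTorsionFree ℝ F
  have hodd := hasReflParityOn_pdSr hD h z hz
  rwa [reflD_eq_self h0, neg_one_smul, self_eq_neg] at hodd

theorem HasReflParityOn.firstOrderOp_xDir_eq_zero (h : HasReflParityOn p D (-1) u)
    (hD : IsOpen D) (hz : z ∈ D) (h0 : z.2 = 0) (K : Fin (p + 1) → F →L[ℝ] F) :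
    firstOrderOp K (xDir p) u z = 0 := by
  refine Finset.sum_eq_zero fun s _ => ?_
  have : IsAddTorsionFree F := .of_isTorsionFree ℝ F
  have hodd := h.fderiv_reflD hD hz (xDir p s)
  rw [reflD_eq_self h0, reflD_eq_self rfl, neg_one_smul, self_eq_neg] at hodd
  rw [hodd, map_zero]

end ReflectionParity

section CauchyRiemannSmoothness

variable {F : Type*} [NormedAddCommGroup F] [NormedSpace ℝ F]

/-- The operator coefficients of `(F₁, F₂) ↦ (D F₁ - ε ∂_r F₂, D̄ F₂ + ε ∂_r F₁)`, where
`D = ∑ s, K s ∂_{x_s}` and `D̄ = ∑ s, Kb s ∂_{x_s}`. -/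
def crCoeff {ι : Type*} (ε : ℝ) (K Kb : ι → F →L[ℝ] F) : ι ⊕ Unit → F × F →L[ℝ] F × F :=
  Sum.elim (fun s => (K s).prodMap (Kb s)) fun _ =>
    ε • (-ContinuousLinearMap.snd ℝ F F).prod (.fst ℝ F F)

theorem FactorsLaplacian.crCoeff {ι : Type*} {K Kb : ι → F →L[ℝ] F}
    (h : FactorsLaplacian Kb K) (h' : FactorsLaplacian K Kb) :
    FactorsLaplacian (crCoeff (-1) Kb K) (crCoeff 1 K Kb) where
  apply_apply_self := by
    rintro (s | _) x <;> ext <;> simp [GPSM.crCoeff, h.apply_apply_self, h'.apply_apply_self]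
  anticomm := by
    rintro (s | _) (t | _) hst x
    · have hst' : s ≠ t := fun heq => hst (congrArg _ heq)
      ext <;> simp [GPSM.crCoeff, h.anticomm hst', h'.anticomm hst']
    · ext <;> simp [GPSM.crCoeff]
    · ext <;> simp [GPSM.crCoeff]
    · exact absurd rfl hst

/-- The standard basis of `ℝ^{p+2}` with coordinates `(x_p, r)`. -/
noncomputable def sliceBasis (p : ℕ) :
    Module.Basis (Fin (p + 1) ⊕ Unit) ℝ ((Fin (p + 1) → ℝ) × ℝ) :=
  (Pi.basisFun ℝ _).prod (.singleton Unit ℝ)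

variable {p : ℕ} {K Kb : Fin (p + 1) → F →L[ℝ] F} {D : Set ((Fin (p + 1) → ℝ) × ℝ)}
  {F₁ F₂ : (Fin (p + 1) → ℝ) × ℝ → F} {z : (Fin (p + 1) → ℝ) × ℝ}

theorem firstOrderOp_crCoeff (hF₁ : DifferentiableAt ℝ F₁ z) (hF₂ : DifferentiableAt ℝ F₂ z) :
    firstOrderOp (crCoeff 1 K Kb) (sliceBasis p) (fun y => (F₁ y, F₂ y)) z =
      (firstOrderOp K (xDir p) F₁ z - pdSr p F₂ z,
        firstOrderOp Kb (xDir p) F₂ z + pdSr p F₁ z) := by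
  ext <;> simp [firstOrderOp, hF₁.fderiv_prodMk hF₂, crCoeff, sliceBasis, pdSr, xDir,
    Prod.fst_sum, Prod.snd_sum, sub_eq_add_neg]

theorem FactorsLaplacian.isSystemSolutionOn [CompleteSpace F] (h : FactorsLaplacian Kb K)
    (h' : FactorsLaplacian K Kb) (hD : IsOpen D) (hF₁ : ContDiffOn ℝ 1 F₁ D)
    (hF₂ : ContDiffOn ℝ 1 F₂ D)
    (hCR : ∀ z ∈ D, firstOrderOp K (xDir p) F₁ z - pdSr p F₂ z = 0 ∧
      firstOrderOp Kb (xDir p) F₂ z + pdSr p F₁ z = 0) :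
    IsSystemSolutionOn K Kb 0 D F₁ F₂ := by
  have hsmooth : ContDiffOn ℝ ∞ (fun z => (F₁ z, F₂ z)) D := by
    refine (h.crCoeff h').contDiffOn (sliceBasis p) hD (hF₁.prodMk hF₂) fun z hz => ?_
    rw [firstOrderOp_crCoeff ((hF₁.differentiableOn one_ne_zero).differentiableAt (hD.mem_nhds hz))
      ((hF₂.differentiableOn one_ne_zero).differentiableAt (hD.mem_nhds hz)),
      (hCR z hz).1, (hCR z hz).2, Prod.mk_zero_zero]
  exact ⟨hsmooth.fst, hsmooth.snd, fun z hz => by simpa using (hCR z hz).1,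
    fun z hz => (hCR z hz).2⟩

theorem ak_bk_system_general [CompleteSpace F] (hKbK : FactorsLaplacian Kb K)
    (hKKb : FactorsLaplacian K Kb) (hD : IsOpen D) (hstem : IsStem p D F₁ F₂)
    (hF₁ : ContDiffOn ℝ 1 F₁ D) (hF₂ : ContDiffOn ℝ 1 F₂ D)
    (hCR : ∀ z ∈ D, firstOrderOp K (xDir p) F₁ z - pdSr p F₂ z = 0 ∧
      firstOrderOp Kb (xDir p) F₂ z + pdSr p F₁ z = 0) (k : ℕ) :
    (∀ z ∈ D, z.2 ≠ 0 →
      firstOrderOp K (xDir p) ((T1 p)^[k] F₁) z - pdSr p ((T2 p)^[k] F₂) z =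
        (2 * k / z.2) • (T2 p)^[k] F₂ z) ∧
    ∀ z ∈ D, firstOrderOp Kb (xDir p) ((T2 p)^[k] F₂) z + pdSr p ((T1 p)^[k] F₁) z = 0 := by
  have hoff : IsSystemSolutionOn K Kb (2 * k) (D ∩ {z | z.2 ≠ 0}) ((T1 p)^[k] F₁)
      ((T2 p)^[k] F₂) :=
    ((hKbK.isSystemSolutionOn hKKb hD hF₁ hF₂ hCR).mono inter_subset_left).iterate_T1_T2
      (hD.inter (isOpen_ne_fun continuous_snd continuous_const)) (fun z hz => hz.2) k
  have heven : HasReflParityOn p D 1 ((T1 p)^[k] F₁) :=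
    .iterate (fun z hz => by simpa using (hstem z hz).1) (fun _ => hasReflParityOn_T1 hD) k
  have hodd : HasReflParityOn p D (-1) ((T2 p)^[k] F₂) :=
    .iterate (fun z hz => by simpa using (hstem z hz).2) (fun _ => hasReflParityOn_T2 hD) k
  refine ⟨fun z hz h0 => hoff.eq_fst z ⟨hz, h0⟩, fun z hz => ?_⟩
  by_cases h0 : z.2 = 0
  · rw [hodd.firstOrderOp_xDir_eq_zero hD hz h0, heven.pdSr_eq_zero hD hz h0, add_zero]
  · exact hoff.eq_snd z ⟨hz, h0⟩

end CauchyRiemannSmoothness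

section HypercomplexBases

variable {conj : A → A}

namespace IsAltStarAlg

/-- Left multiplication by `a`, as a continuous linear operator on the algebra. -/
noncomputable def leftMul (H : IsAltStarAlg A conj) (a : A) : A →L[ℝ] A :=
  haveI := H.finDim
  LinearMap.toContinuousLinearMap
    { toFun := fun b => a * b
      map_add' := H.mul_add' a
      map_smul' := fun r b => H.mul_smul' r a b }

@[simp]
theorem leftMul_apply (H : IsAltStarAlg A conj) (a b : A) : H.leftMul a b = a * b :=
  rfl

variable {a b : A} {r s : ℝ}

theorem mul_neg (H : IsAltStarAlg A conj) (a b : A) : a * -b = -(a * b) :=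
  map_neg (H.leftMul a) b

theorem sub_mul (H : IsAltStarAlg A conj) (a b c : A) : (a - b) * c = a * c - b * c := by
  rw [eq_sub_iff_add_eq, ← H.add_mul', sub_add_cancel]

theorem neg_mul (H : IsAltStarAlg A conj) (a b : A) : -a * b = -(a * b) := by
  rw [eq_neg_iff_add_eq_zero, ← H.add_mul', neg_add_cancel]
  simpa using H.smul_mul' 0 a b

theorem conj_mul_mul_self (H : IsAltStarAlg A conj) (ha : a + conj a = r • 1) (c : A) :
    conj a * (a * c) = conj a * a * c := by
  simp only [eq_sub_of_add_eq' ha, H.sub_mul, H.smul_mul', H.one_mul', H.alt_left]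

theorem conj_mul_mul_add_conj_mul_mul (H : IsAltStarAlg A conj)
    (ha : a + conj a = r • 1) (hb : b + conj b = s • 1) (c : A) :
    conj a * (b * c) + conj b * (a * c) = (conj a * b + conj b * a) * c := by
  have hab : a + b + conj (a + b) = (r + s) • 1 := by
    rw [H.conj_add, add_smul, ← ha, ← hb]
    abel
  have hpolar := H.conj_mul_mul_self hab c
  simp only [H.conj_add, H.add_mul', H.mul_add', H.conj_mul_mul_self ha,
    H.conj_mul_mul_self hb] at hpolar ⊢
  linear_combination (norm := abel) hpolar

theorem factorsLaplacian_leftMul (H : IsAltStarAlg A conj) {ι : Type*} {a : ι → A}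
    (htrace : ∀ i, ∃ r : ℝ, a i + conj (a i) = r • 1) (hnorm : ∀ i, conj (a i) * a i = 1)
    (horth : Pairwise fun i j => conj (a i) * a j + conj (a j) * a i = 0) :
    FactorsLaplacian (fun i => H.leftMul (conj (a i))) fun i => H.leftMul (a i) where
  apply_apply_self i x := by
    obtain ⟨r, hr⟩ := htrace i
    simp [H.conj_mul_mul_self hr, hnorm, H.one_mul']
  anticomm i j hij x := by
    obtain ⟨r, hr⟩ := htrace i
    obtain ⟨s, hs⟩ := htrace j
    simpa [H.conj_mul_mul_add_conj_mul_mul hr hs, horth hij] using H.smul_mul' 0 0 x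

end IsAltStarAlg

namespace IsHypBasis

variable {v : ℕ → A} {m s t : ℕ}

theorem exists_add_conj_eq_smul_one (hv : IsHypBasis A conj v m) (hs : s ≤ m) :
    ∃ r : ℝ, v s + conj (v s) = r • 1 := by
  obtain ⟨r, -, hr, -⟩ := hv.mem_cone (v s)
    (Submodule.subset_span ⟨⟨s, Nat.lt_succ_of_le hs⟩, rfl⟩)
  exact ⟨r, hr⟩

theorem conj_eq_neg (hv : IsHypBasis A conj v m) (hs : s ≠ 0) (hsm : s ≤ m) :
    conj (v s) = -v s :=
  eq_neg_of_add_eq_zero_right (hv.trace_zero s (Nat.one_le_iff_ne_zero.2 hs) hsm)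

theorem mul_conj_self (hv : IsHypBasis A conj v m) (H : IsAltStarAlg A conj)
    (hs : s ≤ m) : v s * conj (v s) = 1 := by
  rcases eq_or_ne s 0 with rfl | h0
  · rw [hv.v_zero, H.conj_one, H.one_mul']
  · exact hv.norm_one s (Nat.one_le_iff_ne_zero.2 h0) hs

theorem conj_mul_self (hv : IsHypBasis A conj v m) (H : IsAltStarAlg A conj)
    (hs : s ≤ m) : conj (v s) * v s = 1 := by
  rcases eq_or_ne s 0 with rfl | h0
  · rw [hv.v_zero, H.conj_one, H.one_mul']
  · rw [← hv.mul_conj_self H hs, hv.conj_eq_neg h0 hs, H.neg_mul, H.mul_neg]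

theorem mul_conj_add_mul_conj (hv : IsHypBasis A conj v m) (H : IsAltStarAlg A conj)
    (hs : s ≤ m) (ht : t ≤ m) (hst : s ≠ t) : v s * conj (v t) + v t * conj (v s) = 0 := by
  rcases eq_or_ne s 0 with rfl | hs0
  · simp [hv.v_zero, H.conj_one, H.one_mul', H.mul_one', hv.conj_eq_neg hst.symm ht]
  rcases eq_or_ne t 0 with rfl | ht0
  · simp [hv.v_zero, H.conj_one, H.one_mul', H.mul_one', hv.conj_eq_neg hs0 hs]
  · simp [hv.conj_eq_neg hs0 hs, hv.conj_eq_neg ht0 ht, H.mul_neg, hv.anticomm s t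
      (Nat.one_le_iff_ne_zero.2 hs0) hs (Nat.one_le_iff_ne_zero.2 ht0) ht hst]

theorem conj_mul_add_conj_mul (hv : IsHypBasis A conj v m) (H : IsAltStarAlg A conj)
    (hs : s ≤ m) (ht : t ≤ m) (hst : s ≠ t) : conj (v s) * v t + conj (v t) * v s = 0 := by
  rcases eq_or_ne s 0 with rfl | hs0
  · simp [hv.v_zero, H.conj_one, H.one_mul', H.mul_one', hv.conj_eq_neg hst.symm ht]
  rcases eq_or_ne t 0 with rfl | ht0
  · simp [hv.v_zero, H.conj_one, H.one_mul', H.mul_one', hv.conj_eq_neg hs0 hs]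
  · simp [hv.conj_eq_neg hs0 hs, hv.conj_eq_neg ht0 ht, H.neg_mul, hv.anticomm s t
      (Nat.one_le_iff_ne_zero.2 hs0) hs (Nat.one_le_iff_ne_zero.2 ht0) ht hst]

variable {p : ℕ}

theorem factorsLaplacian_leftMul_conj_self (hv : IsHypBasis A conj v m) (H : IsAltStarAlg A conj)
    (hp : p ≤ m) :
    FactorsLaplacian (fun s : Fin (p + 1) => H.leftMul (conj (v s)))
      fun s => H.leftMul (v s) :=
  have hle : ∀ s : Fin (p + 1), (s : ℕ) ≤ m := fun s => s.is_le.trans hp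
  H.factorsLaplacian_leftMul (fun s => hv.exists_add_conj_eq_smul_one (hle s))
    (fun s => hv.conj_mul_self H (hle s)) fun s t hst =>
      hv.conj_mul_add_conj_mul H (hle s) (hle t) (Fin.val_ne_of_ne hst)

theorem factorsLaplacian_leftMul_self_conj (hv : IsHypBasis A conj v m) (H : IsAltStarAlg A conj)
    (hp : p ≤ m) :
    FactorsLaplacian (fun s : Fin (p + 1) => H.leftMul (v s))
      fun s => H.leftMul (conj (v s)) := by
  have hle : ∀ s : Fin (p + 1), (s : ℕ) ≤ m := fun s => s.is_le.trans hp
  simpa only [H.conj_conj] using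
    H.factorsLaplacian_leftMul (a := fun s : Fin (p + 1) => conj (v s))
      (fun s => by
        simpa only [H.conj_conj, add_comm] using hv.exists_add_conj_eq_smul_one (hle s))
      (fun s => by simpa only [H.conj_conj] using hv.mul_conj_self H (hle s))
      fun s t hst => by
        simpa only [H.conj_conj] using
          hv.mul_conj_add_mul_conj H (hle s) (hle t) (Fin.val_ne_of_ne hst)

end IsHypBasis

variable {p : ℕ}

theorem DopSx_eq_firstOrderOp (H : IsAltStarAlg A conj) (v : ℕ → A)
    (G : (Fin (p + 1) → ℝ) × ℝ → A) :
    DopSx v p G = firstOrderOp (fun s : Fin (p + 1) => H.leftMul (v s)) (xDir p) G :=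
  rfl

theorem DbaropSx_eq_firstOrderOp (H : IsAltStarAlg A conj) {v : ℕ → A} {m : ℕ}
    (hv : IsHypBasis A conj v m) (hp : p ≤ m) (G : (Fin (p + 1) → ℝ) × ℝ → A) :
    DbaropSx v p G = firstOrderOp (fun s : Fin (p + 1) => H.leftMul (conj (v s))) (xDir p) G := by
  have hconj : ∀ s : Fin p, conj (v (s + 1)) = -v (s + 1) := fun s =>
    hv.conj_eq_neg (Nat.succ_ne_zero s) (s.is_lt.trans_le hp)
  ext z
  simp [DbaropSx, firstOrderOp, Fin.sum_univ_succ, pdSx, xDir, hv.v_zero, hconj, H.conj_one,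
    H.one_mul', H.neg_mul, sub_eq_add_neg]

end HypercomplexBases

/-- For `f = F₁ + ωF₂ ∈ GSR(Ω_D)`, setting `A_k = ((1/r)∂_r)^k F₁` and
`B_k = (∂_r ∘ (1/r))^k F₂` (with values at `r = 0` given by the limits), we have
`D_{x_p} A_k - ∂_r B_k = (2k/r) B_k` (for `r ≠ 0`) and
`D̄_{x_p} B_k + ∂_r A_k = 0` on `D`. -/
theorem ak_bk_system
    {A : Type*} [NormedAddCommGroup A] [NormedSpace ℝ A] [Mul A] [One A]
    (conj : A → A) (H : IsAltStarAlg A conj)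
    (v : ℕ → A) (m p : ℕ) (hv : IsHypBasis A conj v m) (hp : p < m)
    (D : Set ((Fin (p + 1) → ℝ) × ℝ)) (hD : IsOpen D)
    (hDrefl : ∀ z ∈ D, reflD p z ∈ D)
    (F₁ F₂ : (Fin (p + 1) → ℝ) × ℝ → A) (hstem : IsStem p D F₁ F₂)
    (hF₁ : ContDiffOn ℝ 1 F₁ D) (hF₂ : ContDiffOn ℝ 1 F₂ D)
    (f : (Fin (m + 1) → ℝ) → A) (hind : Induced v m p D F₁ F₂ f)
    (hCR : StemCR v p D F₁ F₂) (k : ℕ) :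
    (∀ z ∈ D, z.2 ≠ 0 →
      DopSx v p ((T1 p)^[k] F₁) z - pdSr p ((T2 p)^[k] F₂) z =
        ((2 * (k : ℝ)) / z.2) • ((T2 p)^[k] F₂) z) ∧
    (∀ z ∈ D,
      DbaropSx v p ((T2 p)^[k] F₂) z + pdSr p ((T1 p)^[k] F₁) z = 0) := by
  have := H.finDim
  have : CompleteSpace A := FiniteDimensional.complete ℝ A
  simp only [StemCR, DopSx_eq_firstOrderOp H, DbaropSx_eq_firstOrderOp H hv hp.le] at hCR ⊢
  exact ak_bk_system_general (hv.factorsLaplacian_leftMul_conj_self H hp.le)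
    (hv.factorsLaplacian_leftMul_self_conj H hp.le) hD hstem hF₁ hF₂ hCR k

end GPSM
end
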